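/- Let T > 0, let g satisfy (g1), be regularly oscillating at zero, and satisfy lim_{s→0⁺} g(s)/s = 0 and lim_{s→+∞} g(s)/s = +∞. Let a ∈ L¹([0,T]) satisfy (a1) and (a2). Then the equation u'' + a(x) g(u) = 0 has at least one positive solution satisfying the Neumann boundary conditions and at least one positive solution satisfying the periodic boundary conditions. -/

import Mathlib

open MeasureTheory Set Filter

/-- `u` (with derivative `u'`) is a C¹ solution of `u'' + f(x) = 0` on `[0,T]`:
`u'` is absolutely continuous and the equation holds a.e., expressed via the
integral equation `u'(x) = u'(0) − ∫₀ˣ f(t) dt`. -/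
def IsSolOn (T : ℝ) (f : ℝ → ℝ) (u u' : ℝ → ℝ) : Prop :=
  (∀ x ∈ Icc (0:ℝ) T, HasDerivWithinAt u (u' x) (Icc (0:ℝ) T) x) ∧
  ContinuousOn u' (Icc (0:ℝ) T) ∧
  ∀ x ∈ Icc (0:ℝ) T, u' x = u' 0 - ∫ t in (0:ℝ)..x, f t

/-- The equation `u'' + a(x) g(u) = 0` on `[0,T]` has a positive solution
satisfying the Neumann boundary conditions. -/
def PosSolNeumann (T : ℝ) (a g : ℝ → ℝ) : Prop :=
  ∃ u u' : ℝ → ℝ, IsSolOn T (fun t => a t * g (u t)) u u' ∧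
    (∀ x ∈ Icc (0:ℝ) T, 0 < u x) ∧ u' 0 = 0 ∧ u' T = 0

/-- The equation `u'' + a(x) g(u) = 0` on `[0,T]` has a positive solution
satisfying the periodic boundary conditions. -/
def PosSolPeriodic (T : ℝ) (a g : ℝ → ℝ) : Prop :=
  ∃ u u' : ℝ → ℝ, IsSolOn T (fun t => a t * g (u t)) u u' ∧
    (∀ x ∈ Icc (0:ℝ) T, 0 < u x) ∧ u 0 = u T ∧ u' 0 = u' T

/-- Condition (g1): `g : [0,∞) → [0,∞)` is continuous, `g 0 = 0`, `g > 0` on `(0,∞)`. -/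
def CondG1 (g : ℝ → ℝ) : Prop :=
  ContinuousOn g (Ici (0:ℝ)) ∧ (∀ s : ℝ, 0 ≤ s → 0 ≤ g s) ∧ g 0 = 0 ∧
    ∀ s : ℝ, 0 < s → 0 < g s

/-- `g` is regularly oscillating at zero. -/
def RegOscAtZero (g : ℝ → ℝ) : Prop :=
  ∀ ε : ℝ, 0 < ε → ∃ δ > (0:ℝ), ∃ η > (0:ℝ), ∀ s ω : ℝ,
    0 < s → s < δ → |ω - 1| < η → |g (ω * s) / g s - 1| < ε

/-- `liminf_{s → +∞} g(s)/s`, computed in `EReal`. -/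
noncomputable def GrowthLiminf (g : ℝ → ℝ) : EReal :=
  liminf (fun s : ℝ => ((g s / s : ℝ) : EReal)) atTop

/-- `limsup_{s → +∞} g(s)/s`, computed in `EReal`. -/
noncomputable def GrowthLimsup (g : ℝ → ℝ) : EReal :=
  limsup (fun s : ℝ => ((g s / s : ℝ) : EReal)) atTop

/-- Condition (a1): there are `m ≥ 1` pairwise disjoint closed intervals in `[0,T]`
on which `a ≥ 0` a.e. and `a` is not a.e. zero, while `a ≤ 0` a.e. outside them. -/
def CondA1 (T : ℝ) (a : ℝ → ℝ) : Prop :=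
  ∃ (m : ℕ) (σ τ : Fin m → ℝ), 0 < m ∧
    (∀ i, 0 ≤ σ i ∧ σ i ≤ τ i ∧ τ i ≤ T) ∧
    (Pairwise fun i j => Disjoint (Icc (σ i) (τ i)) (Icc (σ j) (τ j))) ∧
    (∀ i, ∀ᵐ x ∂(volume.restrict (Icc (σ i) (τ i))), 0 ≤ a x) ∧
    (∀ i, ¬ (∀ᵐ x ∂(volume.restrict (Icc (σ i) (τ i))), a x = 0)) ∧
    (∀ᵐ x ∂(volume.restrict (Icc (0:ℝ) T \ ⋃ i, Icc (σ i) (τ i))), a x ≤ 0)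

lemma avoid_lt {φ : ℝ → ℝ} (hφ : Continuous φ) {s t v : ℝ} (hst : s ≤ t)
    (h : ∀ x ∈ Icc s t, φ x ≠ v) (hs : φ s < v) : φ t < v := by
  by_contra hc
  push Not at hc
  obtain ⟨x, hx, hxv⟩ := intermediate_value_Icc hst hφ.continuousOn ⟨hs.le, hc⟩
  exact h x hx hxv

lemma avoid_gt {φ : ℝ → ℝ} (hφ : Continuous φ) {s t v : ℝ} (hst : s ≤ t)
    (h : ∀ x ∈ Icc s t, φ x ≠ v) (hs : v < φ s) : v < φ t := by
  by_contra hc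
  push Not at hc
  obtain ⟨x, hx, hxv⟩ := intermediate_value_Icc' hst hφ.continuousOn ⟨hc, hs.le⟩
  exact h x hx hxv

lemma avoid_gt' {φ : ℝ → ℝ} (hφ : Continuous φ) {s t v : ℝ} (hst : s ≤ t)
    (h : ∀ x ∈ Icc s t, φ x ≠ v) (hs : v < φ t) : v < φ s := by
  by_contra hc
  push Not at hc
  obtain ⟨x, hx, hxv⟩ := intermediate_value_Icc hst hφ.continuousOn ⟨hc, hs.le⟩
  exact h x hx hxv

lemma polar_lift {G : ℝ × ℝ → ℂ} (hG : Continuous G) (h0 : ∀ p, G p ≠ 0) :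
    ∃ θ ρ : ℝ × ℝ → ℝ, Continuous θ ∧ (∀ p, 0 < ρ p) ∧
      (∀ p, (G p).re = ρ p * Real.cos (θ p)) ∧ (∀ p, (G p).im = ρ p * Real.sin (θ p)) := by
  obtain ⟨L, ⟨-, hL⟩, -⟩ := Complex.isCoveringMapOn_exp.existsUnique_continuousMap_lifts
    (⟨G, hG⟩ : C(ℝ × ℝ, ℂ)) (a₀ := (0,0)) (Complex.exp_log (h0 _)) (fun x => h0 x)
  have hL' : ∀ p, G p = Complex.exp (L p) := fun p => (congrFun hL p).symm
  refine ⟨fun p => (L p).im, fun p => Real.exp (L p).re, ?_, fun p => Real.exp_pos _, ?_, ?_⟩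
  · exact Complex.continuous_im.comp L.continuous
  · intro p; rw [hL', Complex.exp_re]
  · intro p; rw [hL', Complex.exp_im]

lemma topo2d {F1 F2 : ℝ × ℝ → ℝ} (hF1 : Continuous F1) (hF2 : Continuous F2)
    {r C D e : ℝ} (hrC : r ≤ C) (he : 0 < e) (heD : e ≤ D)
    (h1 : ∀ d ∈ Icc (-D) D, F1 (C, d) < 0)
    (h1a : ∀ c ∈ Icc r C, F1 (c, -D) < 0)
    (h1b : ∀ c ∈ Icc r C, F1 (c, D) < 0)
    (h2 : ∀ d ∈ Icc (-D) (-e), F1 (r, d) < 0)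
    (h3 : 0 < F1 (r, e))
    (h4 : ∀ d ∈ Icc (-e) e, F1 (r, d) = 0 → 0 < F2 (r, d))
    (h5 : ∀ d ∈ Icc e D, F1 (r, d) = 0 → F2 (r, d) < 0) :
    ∃ c ∈ Icc r C, ∃ d ∈ Icc (-D) D, F1 (c, d) = 0 ∧ F2 (c, d) = 0 := by
  by_contra hno
  push Not at hno
  set P : ℝ × ℝ → ℝ × ℝ := fun p => (max r (min C p.1), max (-D) (min D p.2)) with hP
  have hPc : Continuous P := by fun_prop
  have hPid : ∀ c ∈ Icc r C, ∀ d ∈ Icc (-D) D, P (c, d) = (c, d) := by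
    intro c hc d hd
    simp only [hP]
    rw [min_eq_right hc.2, max_eq_right hc.1, min_eq_right hd.2, max_eq_right hd.1]
  have hPm : ∀ p, (P p).1 ∈ Icc r C ∧ (P p).2 ∈ Icc (-D) D := by
    intro p
    simp only [hP]
    exact ⟨⟨le_max_left _ _, max_le hrC (min_le_left _ _)⟩,
      ⟨le_max_left _ _, max_le (by linarith) (min_le_left _ _)⟩⟩
  obtain ⟨θ, ρ, hθ, hρ, hre, him⟩ := polar_lift (G := fun p => ⟨F1 (P p), F2 (P p)⟩)
    (by
      have : (fun p => (⟨F1 (P p), F2 (P p)⟩ : ℂ)) =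
        fun p => ((F1 (P p) : ℝ) : ℂ) + ((F2 (P p) : ℝ) : ℂ) * Complex.I := by
        funext p; exact (Complex.mk_eq_add_mul_I _ _)
      rw [this]; fun_prop)
    (by
      intro p hp
      have h := Complex.ext_iff.1 hp
      simp only [Complex.zero_re, Complex.zero_im] at h
      exact hno _ (hPm p).1 _ (hPm p).2 h.1 h.2)
  simp only at hre him
  have hre' : ∀ c ∈ Icc r C, ∀ d ∈ Icc (-D) D, F1 (c, d) = ρ (c, d) * Real.cos (θ (c, d)) := by
    intro c hc d hd
    rw [← hre, hPid c hc d hd]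
  have him' : ∀ c ∈ Icc r C, ∀ d ∈ Icc (-D) D, F2 (c, d) = ρ (c, d) * Real.sin (θ (c, d)) := by
    intro c hc d hd
    rw [← him, hPid c hc d hd]
  have hrm : r ∈ Icc r C := ⟨le_rfl, hrC⟩
  have hCm : C ∈ Icc r C := ⟨hrC, le_rfl⟩
  have hDm : -D ∈ Icc (-D) D := ⟨le_rfl, by linarith⟩
  have hDp : D ∈ Icc (-D) D := ⟨by linarith, le_rfl⟩
  -- normalise
  obtain ⟨k, hk1, hk2⟩ : ∃ k : ℤ, Real.pi / 2 + k * (2 * Real.pi) < θ (r, -D) ∧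
      θ (r, -D) < 3 * Real.pi / 2 + k * (2 * Real.pi) := by
    have hcos : Real.cos (θ (r, -D)) < 0 := by
      have := h1a r hrm
      rw [hre' r hrm _ hDm] at this
      by_contra hc
      push Not at hc
      have := mul_nonneg (hρ (r, -D)).le hc
      linarith
    obtain ⟨k, hk, -⟩ := existsUnique_sub_zsmul_mem_Ico (a := 2 * Real.pi) (by positivity)
      (θ (r, -D)) (-(Real.pi / 2))
    simp only [zsmul_eq_mul, mem_Ico] at hk
    refine ⟨k, ?_, ?_⟩
    · by_contra hc
      push Not at hc
      have : 0 ≤ Real.cos (θ (r, -D) - k * (2 * Real.pi)) :=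
        Real.cos_nonneg_of_mem_Icc ⟨by linarith [hk.1], by linarith⟩
      rw [Real.cos_sub_int_mul_two_pi] at this
      linarith
    · linarith [hk.2]
  have c1 : ∀ j : ℤ, Real.cos (Real.pi / 2 + j * (2 * Real.pi)) = 0 := by
    intro j; rw [Real.cos_add_int_mul_two_pi, Real.cos_pi_div_two]
  have s1 : ∀ j : ℤ, Real.sin (Real.pi / 2 + j * (2 * Real.pi)) = 1 := by
    intro j; rw [Real.sin_add_int_mul_two_pi, Real.sin_pi_div_two]
  have e3 : 3 * Real.pi / 2 = Real.pi / 2 + Real.pi := by ring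
  have c2 : ∀ j : ℤ, Real.cos (3 * Real.pi / 2 + j * (2 * Real.pi)) = 0 := by
    intro j; rw [Real.cos_add_int_mul_two_pi, e3, Real.cos_add_pi, Real.cos_pi_div_two, neg_zero]
  have s2 : ∀ j : ℤ, Real.sin (3 * Real.pi / 2 + j * (2 * Real.pi)) = -1 := by
    intro j; rw [Real.sin_add_int_mul_two_pi, e3, Real.sin_add_pi, Real.sin_pi_div_two]
  set v := Real.pi / 2 + k * (2 * Real.pi) with hv
  set V := 3 * Real.pi / 2 + k * (2 * Real.pi) with hV
  -- path B
  have B1 : v < θ (C, -D) := by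
    refine avoid_gt (φ := fun c => θ (c, -D)) (by fun_prop) hrC (fun c hc hcv => ?_) hk1
    have := h1a c hc
    rw [hre' c hc _ hDm, hcv, c1] at this
    simp at this
  have B2 : v < θ (C, D) := by
    refine avoid_gt (φ := fun d => θ (C, d)) (by fun_prop) (by linarith : -D ≤ D)
      (fun d hd hcv => ?_) B1
    have := h1 d hd
    rw [hre' C hCm d hd, hcv, c1] at this
    simp at this
  have B3 : v < θ (r, D) := by
    refine avoid_gt' (φ := fun c => θ (c, D)) (by fun_prop) hrC (fun c hc hcv => ?_) B2
    have := h1b c hc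
    rw [hre' c hc _ hDp, hcv, c1] at this
    simp at this
  have A1 : θ (r, e) < V := by
    refine avoid_lt (φ := fun d => θ (r, d)) (by fun_prop) (by linarith : -D ≤ e)
      (fun d hd hcv => ?_) hk2
    have hd' : d ∈ Icc (-D) D := ⟨hd.1, hd.2.trans heD⟩
    have hre0 := hre' r hrm d hd'
    have him0 := him' r hrm d hd'
    rw [hcv, c2, mul_zero] at hre0
    rw [hcv, s2] at him0
    rcases le_total d (-e) with h | h
    · have := h2 d ⟨hd.1, h⟩
      linarith
    · have := h4 d ⟨h, hd.2⟩ hre0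
      linarith [hρ (r, d)]
  have hem : e ∈ Icc (-D) D := ⟨by linarith, heD⟩
  have A2 : θ (r, e) < v := by
    by_contra hc
    push Not at hc
    have hcos : Real.cos (θ (r, e) - k * (2 * Real.pi)) ≤ 0 :=
      Real.cos_nonpos_of_pi_div_two_le_of_le (by linarith) (by linarith)
    rw [Real.cos_sub_int_mul_two_pi] at hcos
    rw [hre' r hrm e hem] at h3
    have := mul_nonneg_of_nonpos_of_nonpos (neg_nonpos.2 (hρ (r, e)).le) hcos
    linarith
  have A3 : θ (r, D) < v := by
    refine avoid_lt (φ := fun d => θ (r, d)) (by fun_prop) heD (fun d hd hcv => ?_) A2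
    have hd' : d ∈ Icc (-D) D := ⟨by linarith [hd.1], hd.2⟩
    have hre0 := hre' r hrm d hd'
    have him0 := him' r hrm d hd'
    rw [hcv, c1, mul_zero] at hre0
    rw [hcv, s1] at him0
    have := h5 d hd hre0
    linarith [hρ (r, d)]
  linarith

def Sol (T : ℝ) (b f : ℝ → ℝ) (c d : ℝ) (u w : ℝ → ℝ) : Prop :=
  Continuous u ∧ Continuous w ∧ ∀ x ∈ Icc (0:ℝ) T,
    u x = c + (∫ t in (0:ℝ)..x, w t) ∧ w x = d - ∫ t in (0:ℝ)..x, b t * f (u t)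

lemma ii_mul {b : ℝ → ℝ} (hb : Integrable b) {h : ℝ → ℝ} (hh : Continuous h) (x y : ℝ) :
    IntervalIntegrable (fun t => b t * h t) volume x y :=
  (hb.intervalIntegrable).mul_continuousOn hh.continuousOn

lemma jc_prim {b : ℝ → ℝ} (hb : Integrable b) {G : ℝ × ℝ → ℝ → ℝ}
    (hG : Continuous fun q : (ℝ × ℝ) × ℝ => G q.1 q.2) :
    Continuous fun q : (ℝ × ℝ) × ℝ => ∫ t in (0:ℝ)..q.2, b t * G q.1 t := by
  rw [continuous_iff_continuousAt]
  rintro ⟨p, x⟩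
  have hGp : ∀ p, Continuous (G p) := fun p => hG.comp (Continuous.prodMk_right p)
  obtain ⟨M, hM⟩ := ((isCompact_closedBall p 1).prod
    (isCompact_Icc (a := -(|x|+1)) (b := |x|+1))).exists_bound_of_continuousOn hG.continuousOn
  have hx := abs_lt.1 (lt_add_one |x|)
  refine intervalIntegral.continuousAt_parametric_primitive_of_dominated
    (F := fun p t => b t * G p t) (fun t => |b t| * M) (-(|x|+1)) (|x|+1) ?_ ?_ ?_ ?_ ?_ ?_ ?_
  · intro p
    exact (hb.1.mul (hGp p).aestronglyMeasurable).restrict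
  · filter_upwards [Metric.closedBall_mem_nhds p one_pos] with q hq
    refine (ae_restrict_iff' measurableSet_uIoc).2 (ae_of_all _ fun t ht => ?_)
    rw [uIoc_of_le (by linarith)] at ht
    rw [norm_mul, Real.norm_eq_abs]
    exact mul_le_mul_of_nonneg_left (hM (q, t) ⟨hq, ⟨ht.1.le, ht.2⟩⟩) (abs_nonneg _)
  · exact (hb.abs.mul_const M).intervalIntegrable
  · refine ae_of_all _ fun t => ?_
    exact (continuous_const.mul (hG.comp (Continuous.prodMk_left t))).continuousAt
  · constructor <;> linarith [abs_nonneg x]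
  · exact hx
  · simp

noncomputable def Wf (b f : ℝ → ℝ) (ε : ℝ) (U : ℝ × ℝ → ℝ → ℝ) (p : ℝ × ℝ) (x : ℝ) : ℝ :=
  p.2 - ∫ t in (0:ℝ)..x, b t * f (U p (max (t - ε) 0))

noncomputable def Uit (b f : ℝ → ℝ) (ε : ℝ) : ℕ → ℝ × ℝ → ℝ → ℝ
  | 0 => fun p _ => p.1
  | k + 1 => fun p x => p.1 + ∫ s in (0:ℝ)..x, Wf b f ε (Uit b f ε k) p s

lemma Wf_cont {b f : ℝ → ℝ} (hb : Integrable b) (hf : Continuous f) {ε : ℝ}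
    {U : ℝ × ℝ → ℝ → ℝ} (hU : Continuous fun q : (ℝ × ℝ) × ℝ => U q.1 q.2) :
    Continuous fun q : (ℝ × ℝ) × ℝ => Wf b f ε U q.1 q.2 := by
  unfold Wf
  refine (by fun_prop : Continuous fun q : (ℝ × ℝ) × ℝ => q.1.2).sub ?_
  refine jc_prim hb (G := fun p t => f (U p (max (t - ε) 0))) ?_
  refine hf.comp (hU.comp (f := fun q : (ℝ × ℝ) × ℝ => (q.1, max (q.2 - ε) 0)) ?_)
  fun_prop

lemma Uit_cont {b f : ℝ → ℝ} (hb : Integrable b) (hf : Continuous f) (ε : ℝ) (k : ℕ) :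
    Continuous fun q : (ℝ × ℝ) × ℝ => Uit b f ε k q.1 q.2 := by
  induction k with
  | zero => simp only [Uit]; fun_prop
  | succ k ih =>
    simp only [Uit]
    refine (by fun_prop : Continuous fun q : (ℝ × ℝ) × ℝ => q.1.1).add ?_
    have h1 := Wf_cont hb hf (ε := ε) ih
    refine intervalIntegral.continuous_parametric_intervalIntegral_of_continuous
      (f := fun (q : (ℝ × ℝ) × ℝ) s => Wf b f ε (Uit b f ε k) q.1 s) ?_ continuous_snd
    exact h1.comp (f := fun z : ((ℝ × ℝ) × ℝ) × ℝ => (z.1.1, z.2)) (by fun_prop)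

lemma Uit_stab {b f : ℝ → ℝ} {ε : ℝ} (hε : 0 < ε) (k : ℕ) (p : ℝ × ℝ) :
    ∀ x, 0 ≤ x → x ≤ k * ε → Uit b f ε (k+1) p x = Uit b f ε k p x := by
  induction k with
  | zero =>
    intro x h0 h1
    have : x = 0 := by simp at h1; linarith
    subst this
    simp [Uit]
  | succ k ih =>
    intro x h0 h1
    change p.1 + (∫ s in (0:ℝ)..x, Wf b f ε (Uit b f ε (k+1)) p s) =
      p.1 + ∫ s in (0:ℝ)..x, Wf b f ε (Uit b f ε k) p s
    congr 1
    refine intervalIntegral.integral_congr fun s hs => ?_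
    rw [uIcc_of_le h0] at hs
    simp only [Wf, sub_right_inj]
    refine intervalIntegral.integral_congr fun t ht => ?_
    rw [uIcc_of_le hs.1] at ht
    rw [ih _ (le_max_right _ _)]
    refine max_le ?_ (by positivity)
    push_cast at h1
    linarith [ht.2, hs.2]

lemma approx_exists {T : ℝ} {b f : ℝ → ℝ} (hb : Integrable b) (hf : Continuous f)
    {ε : ℝ} (hε : 0 < ε) : ∃ U W : ℝ × ℝ → ℝ → ℝ,
    (Continuous fun q : (ℝ × ℝ) × ℝ => U q.1 q.2) ∧
    (Continuous fun q : (ℝ × ℝ) × ℝ => W q.1 q.2) ∧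
    ∀ p, ∀ x ∈ Icc (0:ℝ) T, U p x = p.1 + (∫ t in (0:ℝ)..x, W p t) ∧
      W p x = p.2 - ∫ t in (0:ℝ)..x, b t * f (U p (max (t - ε) 0)) := by
  obtain ⟨N, hN⟩ := exists_nat_gt (T / ε)
  have hN' : T ≤ N * ε := by rw [div_lt_iff₀ hε] at hN; exact hN.le
  refine ⟨Uit b f ε N, Wf b f ε (Uit b f ε N), Uit_cont hb hf ε N,
    Wf_cont hb hf (Uit_cont hb hf ε N), fun p x hx => ⟨?_, rfl⟩⟩
  rw [← Uit_stab hε N p x hx.1 (hx.2.trans hN')]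
  rfl

lemma gron {T A : ℝ} (hT : 0 ≤ T) (hA : 0 ≤ A) {β : ℝ → ℝ} (hβ : Integrable β)
    (hβ0 : ∀ t, 0 ≤ β t) : ∃ B : ℝ, 0 ≤ B ∧ ∀ u θ : ℝ → ℝ, Continuous u → Continuous θ →
      (∀ t, 0 ≤ t → 0 ≤ θ t ∧ θ t ≤ t) →
      (∀ x ∈ Icc (0:ℝ) T, |u x| ≤ A + ∫ t in (0:ℝ)..x, β t * |u (θ t)|) →
      ∀ x ∈ Icc (0:ℝ) T, |u x| ≤ B := by
  have hprim : Continuous fun x => ∫ t in (0:ℝ)..x, β t := intervalIntegral.continuous_primitive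
    (fun a b => hβ.intervalIntegrable) 0
  have huc := (isCompact_Icc (a := (0:ℝ)) (b := T)).uniformContinuousOn_of_continuous
    hprim.continuousOn
  rw [Metric.uniformContinuousOn_iff] at huc
  obtain ⟨η, hη, hη2⟩ := huc (1/2) (by norm_num)
  have hsm : ∀ x ∈ Icc (0:ℝ) T, ∀ y ∈ Icc (0:ℝ) T, x ≤ y → y < x + η →
      ∫ t in x..y, β t ≤ 1/2 := by
    intro x hx y hy hxy hyx
    have := hη2 y hy x hx (by rw [Real.dist_eq, abs_of_nonneg] <;> linarith)
    rw [Real.dist_eq, intervalIntegral.integral_interval_sub_left hβ.intervalIntegrable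
      hβ.intervalIntegrable] at this
    exact (le_abs_self _).trans this.le
  set N := ∫ t, β t with hN
  have hN0 : 0 ≤ N := integral_nonneg hβ0
  have hNle : ∀ x y, x ≤ y → ∫ t in x..y, β t ≤ N := by
    intro x y hxy
    rw [intervalIntegral.integral_of_le hxy]
    exact setIntegral_le_integral hβ (ae_of_all _ hβ0)
  have main : ∀ k : ℕ, ∃ B : ℝ, 0 ≤ B ∧ ∀ u θ : ℝ → ℝ, Continuous u → Continuous θ →
      (∀ t, 0 ≤ t → 0 ≤ θ t ∧ θ t ≤ t) →
      (∀ x ∈ Icc (0:ℝ) T, |u x| ≤ A + ∫ t in (0:ℝ)..x, β t * |u (θ t)|) →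
      ∀ x ∈ Icc (0:ℝ) T, x ≤ k * (η/2) → |u x| ≤ B := by
    intro k
    induction k with
    | zero =>
      refine ⟨A, hA, fun u θ hu hθ hθ2 h x hx hx2 => ?_⟩
      have : x = 0 := by simp at hx2; linarith [hx.1]
      subst this
      simpa using h 0 hx
    | succ k ih =>
      obtain ⟨B, hB, ih⟩ := ih
      refine ⟨2 * A + 2 * N * B + B, by positivity, fun u θ hu hθ hθ2 h => ?_⟩
      have ih := ih u θ hu hθ hθ2 h
      set Y := min T ((k+1:ℕ) * (η/2)) with hY
      have hY0 : 0 ≤ Y := le_min hT (by positivity)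
      obtain ⟨z, hz, hzm⟩ := (isCompact_Icc (a := (0:ℝ)) (b := Y)).exists_isMaxOn
        ⟨0, le_rfl, hY0⟩ hu.abs.continuousOn
      have hzT : z ∈ Icc (0:ℝ) T := ⟨hz.1, hz.2.trans (min_le_left _ _)⟩
      have hmax : ∀ x ∈ Icc (0:ℝ) Y, |u x| ≤ |u z| := fun x hx => hzm hx
      have key : |u z| ≤ 2 * A + 2 * N * B + B := by
        rcases le_total z (k * (η/2)) with hc | hc
        · have := ih z hzT hc
          have : 0 ≤ N * B := by positivity
          linarith
        · set s := (k:ℝ) * (η/2) with hs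
          have hs0 : 0 ≤ s := by positivity
          have hcont : Continuous fun t => |u (θ t)| := (hu.comp hθ).abs
          have h1 := h z hzT
          rw [← intervalIntegral.integral_add_adjacent_intervals (b := s)
            (ii_mul hβ hcont _ _) (ii_mul hβ hcont _ _)] at h1
          have h2 : ∫ t in (0:ℝ)..s, β t * |u (θ t)| ≤ N * B := by
            calc _ ≤ ∫ t in (0:ℝ)..s, β t * B := by
                  refine intervalIntegral.integral_mono_on hs0 (ii_mul hβ hcont _ _)
                    (hβ.mul_const B).intervalIntegrable fun t ht => ?_
                  refine mul_le_mul_of_nonneg_left (ih _ ⟨(hθ2 t ht.1).1, ?_⟩ ?_) (hβ0 t)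
                  · linarith [(hθ2 t ht.1).2, ht.2, hzT.2]
                  · linarith [(hθ2 t ht.1).2, ht.2, hzT.2]
              _ = (∫ t in (0:ℝ)..s, β t) * B := intervalIntegral.integral_mul_const _ _
              _ ≤ N * B := mul_le_mul_of_nonneg_right (hNle _ _ hs0) hB
          have h3 : ∫ t in s..z, β t * |u (θ t)| ≤ 1/2 * |u z| := by
            calc _ ≤ ∫ t in s..z, β t * |u z| := by
                  refine intervalIntegral.integral_mono_on hc (ii_mul hβ hcont _ _)
                    (hβ.mul_const _).intervalIntegrable fun t ht => ?_
                  have ht0 : 0 ≤ t := hs0.trans ht.1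
                  refine mul_le_mul_of_nonneg_left (hmax _ ⟨(hθ2 t ht0).1, ?_⟩) (hβ0 t)
                  linarith [(hθ2 t ht0).2, ht.2, hz.2]
              _ = (∫ t in s..z, β t) * |u z| := intervalIntegral.integral_mul_const _ _
              _ ≤ _ := by
                  refine mul_le_mul_of_nonneg_right (hsm _ ⟨hs0, hc.trans hzT.2⟩ _ hzT hc ?_)
                    (abs_nonneg _)
                  have := hz.2.trans (min_le_right _ _)
                  push_cast at this
                  linarith
          linarith
      intro x hx hx2
      exact (hmax x ⟨hx.1, le_min hx.2 hx2⟩).trans key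
  obtain ⟨k, hk⟩ := exists_nat_gt (T / (η/2))
  obtain ⟨B, hB, h⟩ := main k
  refine ⟨B, hB, fun u θ hu hθ hθ2 hh x hx => h u θ hu hθ hθ2 hh x hx ?_⟩
  rw [div_lt_iff₀ (by positivity)] at hk
  linarith [hx.2]

lemma abs_int_le {b h : ℝ → ℝ} (hb : Integrable b) (hh : Continuous h) {x y B : ℝ} (hxy : x ≤ y)
    (hB0 : 0 ≤ B) (hB : ∀ t ∈ Icc x y, |h t| ≤ B) :
    |∫ t in x..y, b t * h t| ≤ (∫ t, |b t|) * B := by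
  calc |∫ t in x..y, b t * h t| ≤ ∫ t in x..y, |b t * h t| :=
        intervalIntegral.abs_integral_le_integral_abs hxy
    _ ≤ ∫ t in x..y, |b t| * B := by
        refine intervalIntegral.integral_mono_on hxy (ii_mul hb hh _ _).abs
          (hb.abs.mul_const B).intervalIntegrable fun t ht => ?_
        rw [abs_mul]
        exact mul_le_mul_of_nonneg_left (hB t ht) (abs_nonneg _)
    _ = (∫ t in x..y, |b t|) * B := intervalIntegral.integral_mul_const _ _
    _ ≤ _ := by
        refine mul_le_mul_of_nonneg_right ?_ hB0
        rw [intervalIntegral.integral_of_le hxy]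
        exact setIntegral_le_integral hb.abs (ae_of_all _ fun t => abs_nonneg _)

lemma limit_exists {T : ℝ} (hT : 0 ≤ T) {b f : ℝ → ℝ} (hb : Integrable b) (hf : Continuous f)
    {K : ℝ} (hK0 : 0 ≤ K) (hK : ∀ s, |f s| ≤ K * |s|) {A : Set (ℝ × ℝ × ℝ × ℝ)} (hA : IsClosed A)
    {M : ℝ} (hM : ∀ q ∈ A, |q.1| ≤ M ∧ |q.2.1| ≤ M)
    (h : ∀ U W : ℝ × ℝ → ℝ → ℝ, (Continuous fun q : (ℝ × ℝ) × ℝ => U q.1 q.2) →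
      (Continuous fun q : (ℝ × ℝ) × ℝ => W q.1 q.2) → ∃ p : ℝ × ℝ, (p.1, p.2, U p T, W p T) ∈ A) :
    ∃ c d u w, Sol T b f c d u w ∧ (c, d, u T, w T) ∈ A := by
  have hε : ∀ n : ℕ, (0:ℝ) < 1 / ((n:ℝ) + 1) := fun n => Nat.one_div_pos_of_nat
  choose U W hU hW hUW using fun n : ℕ => approx_exists (T := T) hb hf (hε n)
  choose p hp using fun n => h (U n) (W n) (hU n) (hW n)
  set ε : ℕ → ℝ := fun n => 1 / ((n:ℝ) + 1) with hεdef
  set u : ℕ → ℝ → ℝ := fun n => U n (p n) with hudef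
  set w : ℕ → ℝ → ℝ := fun n => W n (p n) with hwdef
  have huc : ∀ n, Continuous (u n) := fun n => (hU n).comp (Continuous.prodMk_right (p n))
  have hwc : ∀ n, Continuous (w n) := fun n => (hW n).comp (Continuous.prodMk_right (p n))
  have hueq : ∀ n, ∀ x ∈ Icc (0:ℝ) T, u n x = (p n).1 + ∫ t in (0:ℝ)..x, w n t :=
    fun n x hx => (hUW n (p n) x hx).1
  have hweq : ∀ n, ∀ x ∈ Icc (0:ℝ) T, w n x = (p n).2 -
      ∫ t in (0:ℝ)..x, b t * f (u n (max (t - ε n) 0)) :=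
    fun n x hx => (hUW n (p n) x hx).2
  have hp1 : ∀ n, |(p n).1| ≤ M := fun n => (hM _ (hp n)).1
  have hp2 : ∀ n, |(p n).2| ≤ M := fun n => (hM _ (hp n)).2
  have hM0 : 0 ≤ M := (abs_nonneg _).trans (hp1 0)
  have hθ : ∀ n t, 0 ≤ t → 0 ≤ max (t - ε n) 0 ∧ max (t - ε n) 0 ≤ t := fun n t ht =>
    ⟨le_max_right _ _, max_le (by linarith [(hε n).le]) ht⟩
  have hθc : ∀ n, Continuous fun t => max (t - ε n) 0 := fun n => by fun_prop
  -- uniform bound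
  obtain ⟨B, hB0, hB⟩ := gron (A := M + T * M) hT (by positivity)
    (β := fun t => T * K * |b t|) (hb.abs.const_mul _) (fun t => by positivity)
  have huB : ∀ n, ∀ x ∈ Icc (0:ℝ) T, |u n x| ≤ B := by
    intro n
    refine hB (u n) (fun t => max (t - ε n) 0) (huc n) (hθc n) (hθ n) ?_
    intro x hx
    have hcont : Continuous fun t => |u n (max (t - ε n) 0)| := ((huc n).comp (hθc n)).abs
    have hcf : Continuous fun t => f (u n (max (t - ε n) 0)) := hf.comp ((huc n).comp (hθc n))
    have hI : ∀ s, IntervalIntegrable (fun t => K * |b t| * |u n (max (t - ε n) 0)|) volume 0 s :=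
      fun s => ii_mul (hb.abs.const_mul K) hcont _ _
    have hwb : ∀ s ∈ Icc (0:ℝ) x, |w n s| ≤ M + ∫ t in (0:ℝ)..x, K * |b t| *
        |u n (max (t - ε n) 0)| := by
      intro s hs
      rw [hweq n s ⟨hs.1, hs.2.trans hx.2⟩]
      refine (abs_sub _ _).trans (add_le_add (hp2 n) ?_)
      calc _ ≤ ∫ t in (0:ℝ)..s, |b t * f (u n (max (t - ε n) 0))| :=
            intervalIntegral.abs_integral_le_integral_abs hs.1
        _ ≤ ∫ t in (0:ℝ)..s, K * |b t| * |u n (max (t - ε n) 0)| := by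
            refine intervalIntegral.integral_mono_on hs.1 (ii_mul hb hcf _ _).abs (hI s)
              fun t ht => ?_
            rw [abs_mul]
            have := mul_le_mul_of_nonneg_left (hK (u n (max (t - ε n) 0))) (abs_nonneg (b t))
            linarith
        _ ≤ _ := by
            refine intervalIntegral.integral_mono_interval le_rfl hs.1 hs.2
              (ae_of_all _ fun t => ?_) (hI x)
            positivity
    rw [hueq n x hx]
    have h1 : |∫ t in (0:ℝ)..x, w n t| ≤ (M + ∫ t in (0:ℝ)..x, K * |b t| *
        |u n (max (t - ε n) 0)|) * |x - 0| := by
      rw [← Real.norm_eq_abs]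
      refine intervalIntegral.norm_integral_le_of_norm_le_const fun t ht => ?_
      rw [uIoc_of_le hx.1] at ht
      exact hwb t ⟨ht.1.le, ht.2⟩
    have h2 : 0 ≤ ∫ t in (0:ℝ)..x, K * |b t| * |u n (max (t - ε n) 0)| :=
      intervalIntegral.integral_nonneg hx.1 fun t _ => by positivity
    have h3 : (M + ∫ t in (0:ℝ)..x, K * |b t| * |u n (max (t - ε n) 0)|) * |x - 0| ≤
      (M + ∫ t in (0:ℝ)..x, K * |b t| * |u n (max (t - ε n) 0)|) * T := by
      refine mul_le_mul_of_nonneg_left ?_ (by positivity)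
      rw [sub_zero, abs_of_nonneg hx.1]; exact hx.2
    have h4 : ∫ t in (0:ℝ)..x, T * K * |b t| * |u n (max (t - ε n) 0)| =
        T * ∫ t in (0:ℝ)..x, K * |b t| * |u n (max (t - ε n) 0)| := by
      rw [← intervalIntegral.integral_const_mul]
      congr 1; ext t; ring
    rw [h4]
    have h5 := abs_add_le (p n).1 (∫ t in (0:ℝ)..x, w n t)
    have := hp1 n
    nlinarith
  set Λ := M + (∫ t, |b t|) * (K * B) with hΛ
  have hN0 : 0 ≤ ∫ t, |b t| := integral_nonneg fun t => abs_nonneg _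
  have hΛ0 : 0 ≤ Λ := by positivity
  have hcf : ∀ n, Continuous fun t => f (u n (max (t - ε n) 0)) :=
    fun n => hf.comp ((huc n).comp (hθc n))
  have hfB : ∀ n, ∀ t ∈ Icc (0:ℝ) T, |f (u n (max (t - ε n) 0))| ≤ K * B := by
    intro n t ht
    refine (hK _).trans (mul_le_mul_of_nonneg_left (huB n _ ?_) hK0)
    exact ⟨(hθ n t ht.1).1, (hθ n t ht.1).2.trans ht.2⟩
  have hwΛ : ∀ n, ∀ x ∈ Icc (0:ℝ) T, |w n x| ≤ Λ := by
    intro n x hx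
    rw [hweq n x hx]
    refine (abs_sub _ _).trans (add_le_add (hp2 n) ?_)
    exact abs_int_le hb (hcf n) hx.1 (by positivity) fun t ht => hfB n t ⟨ht.1, ht.2.trans hx.2⟩
  have hulip : ∀ n, ∀ x ∈ Icc (0:ℝ) T, ∀ y ∈ Icc (0:ℝ) T, |u n x - u n y| ≤ Λ * |x - y| := by
    intro n x hx y hy
    rw [hueq n x hx, hueq n y hy, add_sub_add_left_eq_sub,
      intervalIntegral.integral_interval_sub_left ((hwc n).intervalIntegrable _ _)
        ((hwc n).intervalIntegrable _ _), ← Real.norm_eq_abs]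
    refine intervalIntegral.norm_integral_le_of_norm_le_const fun t ht => ?_
    have := uIoc_subset_uIcc ht
    exact hwΛ n t (uIcc_subset_Icc hy hx this)
  -- compactness
  let X := Icc (0:ℝ) T
  have hcomp : IsCompact {v : BoundedContinuousFunction X ℝ | (∀ x, v x ∈ Icc (-B) B) ∧
      ∀ x y : X, |v x - v y| ≤ Λ * |(x:ℝ) - y|} := by
    refine BoundedContinuousFunction.arzela_ascoli₂ (Icc (-B) B) isCompact_Icc _ ?_ ?_ ?_
    · have e : {v : BoundedContinuousFunction X ℝ | (∀ x, v x ∈ Icc (-B) B) ∧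
          ∀ x y : X, |v x - v y| ≤ Λ * |(x:ℝ) - y|} =
          (⋂ x : X, {v | v x ∈ Icc (-B) B}) ∩ ⋂ x : X, ⋂ y : X,
            {v | |v x - v y| ≤ Λ * |(x:ℝ) - y|} := by
        ext v; simp [mem_iInter]
      rw [e]
      have hev : ∀ x : X, Continuous fun v : BoundedContinuousFunction X ℝ => v x :=
        fun x => continuous_eval_const x
      refine (isClosed_iInter fun x => isClosed_Icc.preimage (hev x)).inter
        (isClosed_iInter fun x => isClosed_iInter fun y => ?_)
      exact isClosed_le ((hev x).sub (hev y)).abs continuous_const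
    · intro v x hv; exact hv.1 x
    · refine Metric.equicontinuous_of_continuity_modulus (fun r => Λ * r) ?_ _ ?_
      · have : Tendsto (fun r : ℝ => Λ * r) (nhds 0) (nhds (Λ * 0)) :=
          (continuous_const.mul continuous_id).tendsto 0
        simpa using this
      · intro x y v
        exact v.2.2 x y
  set v : ℕ → BoundedContinuousFunction X ℝ := fun n =>
    BoundedContinuousFunction.mkOfCompact ⟨fun x => u n x, by fun_prop⟩ with hvdef
  have hvv : ∀ n, v n ∈ {v : BoundedContinuousFunction X ℝ | (∀ x, v x ∈ Icc (-B) B) ∧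
      ∀ x y : X, |v x - v y| ≤ Λ * |(x:ℝ) - y|} := by
    intro n
    exact ⟨fun x => abs_le.1 (huB n x x.2), fun x y => hulip n x x.2 y y.2⟩
  have hcomp2 := hcomp.prod ((isCompact_Icc (a := -M) (b := M)).prod (isCompact_Icc (a := -M) (b := M)))
  obtain ⟨⟨v0, c, d⟩, hv0, φ, hφ, hlim⟩ := hcomp2.tendsto_subseq
    (x := fun n => (v n, (p n).1, (p n).2))
    (fun n => ⟨hvv n, abs_le.1 (hp1 n), abs_le.1 (hp2 n)⟩)
  have hlv : Tendsto (fun n => v (φ n)) atTop (nhds v0) :=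
    (continuous_fst.tendsto _).comp hlim
  have hlc : Tendsto (fun n => (p (φ n)).1) atTop (nhds c) :=
    ((continuous_fst.comp continuous_snd).tendsto _).comp hlim
  have hld : Tendsto (fun n => (p (φ n)).2) atTop (nhds d) :=
    ((continuous_snd.comp continuous_snd).tendsto _).comp hlim
  set u0 : ℝ → ℝ := IccExtend hT (fun x => v0 x) with hu0
  have hu0c : Continuous u0 := (v0.continuous).Icc_extend'
  have hpt : ∀ x ∈ Icc (0:ℝ) T, Tendsto (fun n => u (φ n) x) atTop (nhds (u0 x)) := by
    intro x hx
    have := ((continuous_eval_const (F := BoundedContinuousFunction X ℝ) (⟨x, hx⟩ : X)).tendsto v0).comp hlv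
    rw [hu0, IccExtend_of_mem hT _ hx]
    exact this
  have hεlim : Tendsto (fun n => ε (φ n)) atTop (nhds 0) :=
    tendsto_one_div_add_atTop_nhds_zero_nat.comp hφ.tendsto_atTop
  have hpt2 : ∀ x ∈ Icc (0:ℝ) T, Tendsto (fun n => u (φ n) (max (x - ε (φ n)) 0)) atTop
      (nhds (u0 x)) := by
    intro x hx
    have h1 : Tendsto (fun n => u (φ n) (max (x - ε (φ n)) 0) - u (φ n) x) atTop (nhds 0) := by
      refine squeeze_zero_norm (a := fun n => Λ * ε (φ n)) (fun n => ?_) (by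
        simpa using hεlim.const_mul Λ)
      rw [Real.norm_eq_abs]
      have hh := hθ (φ n) x hx.1
      refine (hulip _ _ ⟨hh.1, hh.2.trans hx.2⟩ _ hx).trans
        (mul_le_mul_of_nonneg_left ?_ hΛ0)
      rw [abs_sub_comm, abs_of_nonneg (by linarith [hh.2])]
      linarith [le_max_left (x - ε (φ n)) 0]
    simpa using h1.add (hpt x hx)
  set w0 : ℝ → ℝ := fun x => d - ∫ t in (0:ℝ)..x, b t * f (u0 t) with hw0
  have hw0c : Continuous w0 := continuous_const.sub
    (intervalIntegral.continuous_primitive (fun x y => ii_mul hb (hf.comp hu0c) x y) 0)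
  have hwpt : ∀ x ∈ Icc (0:ℝ) T, Tendsto (fun n => w (φ n) x) atTop (nhds (w0 x)) := by
    intro x hx
    have e : (fun n => w (φ n) x) = fun n => (p (φ n)).2 -
      ∫ t in (0:ℝ)..x, b t * f (u (φ n) (max (t - ε (φ n)) 0)) := by
      funext n; exact hweq _ x hx
    rw [e]
    refine hld.sub ?_
    refine intervalIntegral.tendsto_integral_filter_of_dominated_convergence
      (fun t => |b t| * (K * B)) ?_ ?_ ?_ ?_
    · exact Eventually.of_forall fun n => (hb.1.mul (hcf _).aestronglyMeasurable).restrict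
    · refine Eventually.of_forall fun n => ae_of_all _ fun t ht => ?_
      rw [uIoc_of_le hx.1] at ht
      rw [norm_mul, Real.norm_eq_abs, Real.norm_eq_abs]
      exact mul_le_mul_of_nonneg_left (hfB _ t ⟨ht.1.le, ht.2.trans hx.2⟩) (abs_nonneg _)
    · exact (hb.abs.mul_const _).intervalIntegrable
    · refine ae_of_all _ fun t ht => ?_
      rw [uIoc_of_le hx.1] at ht
      exact ((hf.tendsto _).comp (hpt2 t ⟨ht.1.le, ht.2.trans hx.2⟩)).const_mul _
  have hueq0 : ∀ x ∈ Icc (0:ℝ) T, u0 x = c + ∫ t in (0:ℝ)..x, w0 t := by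
    intro x hx
    refine tendsto_nhds_unique (hpt x hx) ?_
    have e : (fun n => u (φ n) x) = fun n => (p (φ n)).1 + ∫ t in (0:ℝ)..x, w (φ n) t := by
      funext n; exact hueq _ x hx
    rw [e]
    refine hlc.add ?_
    refine intervalIntegral.tendsto_integral_filter_of_dominated_convergence
      (fun t => Λ) ?_ ?_ ?_ ?_
    · exact Eventually.of_forall fun n => (hwc _).aestronglyMeasurable
    · refine Eventually.of_forall fun n => ae_of_all _ fun t ht => ?_
      rw [uIoc_of_le hx.1] at ht
      exact hwΛ _ t ⟨ht.1.le, ht.2.trans hx.2⟩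
    · exact intervalIntegrable_const
    · refine ae_of_all _ fun t ht => ?_
      rw [uIoc_of_le hx.1] at ht
      exact hwpt t ⟨ht.1.le, ht.2.trans hx.2⟩
  refine ⟨c, d, u0, w0, ⟨hu0c, hw0c, fun x hx => ⟨hueq0 x hx, rfl⟩⟩, ?_⟩
  have hTm : T ∈ Icc (0:ℝ) T := ⟨hT, le_rfl⟩
  refine hA.mem_of_tendsto (hlc.prodMk_nhds (hld.prodMk_nhds
    ((hpt T hTm).prodMk_nhds (hwpt T hTm)))) (Eventually.of_forall fun n => hp (φ n))

lemma Sol.init {T : ℝ} (hT : 0 ≤ T) {b f : ℝ → ℝ} {c d : ℝ} {u w : ℝ → ℝ}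
    (h : Sol T b f c d u w) : u 0 = c ∧ w 0 = d := by
  have := h.2.2 0 ⟨le_rfl, hT⟩
  simpa using this

lemma Sol.du {T : ℝ} {b f : ℝ → ℝ} {c d : ℝ} {u w : ℝ → ℝ}
    (h : Sol T b f c d u w) {x y : ℝ} (hx : x ∈ Icc (0:ℝ) T) (hy : y ∈ Icc (0:ℝ) T) :
    u y - u x = ∫ t in x..y, w t := by
  rw [(h.2.2 x hx).1, (h.2.2 y hy).1, add_sub_add_left_eq_sub,
    intervalIntegral.integral_interval_sub_left (h.2.1.intervalIntegrable _ _)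
        (h.2.1.intervalIntegrable _ _)]

lemma Sol.dw {T : ℝ} {b f : ℝ → ℝ} (hb : Integrable b) (hf : Continuous f)
    {c d : ℝ} {u w : ℝ → ℝ}
    (h : Sol T b f c d u w) {x y : ℝ} (hx : x ∈ Icc (0:ℝ) T) (hy : y ∈ Icc (0:ℝ) T) :
    w y - w x = - ∫ t in x..y, b t * f (u t) := by
  have e := intervalIntegral.integral_interval_sub_left (ii_mul hb (hf.comp h.1) 0 y)
        (ii_mul hb (hf.comp h.1) 0 x)
  simp only [Function.comp] at e
  rw [(h.2.2 x hx).2, (h.2.2 y hy).2, ← e]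
  ring

lemma Sol.u_le {T : ℝ} {b f : ℝ → ℝ} {c d : ℝ} {u w : ℝ → ℝ}
    (h : Sol T b f c d u w) {x y m : ℝ} (hx : 0 ≤ x) (hxy : x ≤ y) (hy : y ≤ T)
    (hm : ∀ t ∈ Icc x y, w t ≤ m) : u y - u x ≤ m * (y - x) := by
  rw [h.du ⟨hx, hxy.trans hy⟩ ⟨hx.trans hxy, hy⟩]
  calc _ ≤ ∫ t in x..y, m := intervalIntegral.integral_mono_on hxy
        (h.2.1.intervalIntegrable _ _) intervalIntegrable_const hm
    _ = _ := by simp; ring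

lemma Sol.u_ge {T : ℝ} {b f : ℝ → ℝ} {c d : ℝ} {u w : ℝ → ℝ}
    (h : Sol T b f c d u w) {x y m : ℝ} (hx : 0 ≤ x) (hxy : x ≤ y) (hy : y ≤ T)
    (hm : ∀ t ∈ Icc x y, m ≤ w t) : m * (y - x) ≤ u y - u x := by
  rw [h.du ⟨hx, hxy.trans hy⟩ ⟨hx.trans hxy, hy⟩]
  calc _ = ∫ t in x..y, m := by simp; ring
    _ ≤ _ := intervalIntegral.integral_mono_on hxy
        intervalIntegrable_const (h.2.1.intervalIntegrable _ _) hm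

lemma boot {φ : ℝ → ℝ} (hφ : Continuous φ) {x0 T M : ℝ} (h0 : φ x0 ≤ M)
    (h : ∀ x ∈ Icc x0 T, (∀ y ∈ Icc x0 x, φ y ≤ M) → φ x < M) : ∀ x ∈ Icc x0 T, φ x < M := by
  by_contra hc
  push Not at hc
  obtain ⟨x, hx, hxM⟩ := hc
  have hK : IsCompact (Icc x0 T ∩ φ ⁻¹' Ici M) :=
    isCompact_Icc.inter_right (isClosed_Ici.preimage hφ)
  obtain ⟨x1, ⟨hx1, hx1M⟩, hleast⟩ := hK.exists_isLeast ⟨x, hx, hxM⟩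
  have hlt : ∀ y ∈ Ico x0 x1, φ y < M := by
    intro y hy
    by_contra hh
    push Not at hh
    have := hleast ⟨⟨hy.1, hy.2.le.trans hx1.2⟩, hh⟩
    linarith [hy.2]
  have hx1e : φ x1 ≤ M := by
    by_contra hh
    push Not at hh
    obtain ⟨z, hz, hzM⟩ := intermediate_value_Icc hx1.1 hφ.continuousOn ⟨h0, hh.le⟩
    have := hleast ⟨⟨hz.1, hz.2.trans hx1.2⟩, hzM.ge⟩
    have : z = x1 := le_antisymm hz.2 this
    subst this
    linarith
  have := h x1 hx1 (fun y hy => by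
    rcases hy.2.lt_or_eq with h | h
    · exact (hlt y ⟨hy.1, h⟩).le
    · rw [h]; exact hx1e)
  exact absurd this (not_lt.2 hx1M)

/-- positivity / crossing -/
lemma Sol.cross {T : ℝ} {b f : ℝ → ℝ} (hb : Integrable b) (hf : Continuous f)
    {K : ℝ} (hK0 : 0 ≤ K) (hK : ∀ s, |f s| ≤ K * |s|) (hfz : ∀ s ≤ 0, f s = 0)
    {c d : ℝ} {u w : ℝ → ℝ} (h : Sol T b f c d u w) (hc : 0 < c)
    {x : ℝ} (hx : x ∈ Icc (0:ℝ) T) (hux : u x ≤ 0) : u T ≤ 0 ∧ w T < 0 := by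
  have hT : 0 ≤ T := hx.1.trans hx.2
  have hKc : IsCompact (Icc 0 T ∩ u ⁻¹' Iic 0) :=
    isCompact_Icc.inter_right (isClosed_Iic.preimage h.1)
  obtain ⟨x0, ⟨hx0, hx0u⟩, hleast⟩ := hKc.exists_isLeast ⟨x, hx, hux⟩
  have hx0u : u x0 ≤ 0 := hx0u
  have hpos : ∀ y ∈ Ico 0 x0, 0 < u y := by
    intro y hy
    by_contra hh
    push Not at hh
    have := hleast ⟨⟨hy.1, hy.2.le.trans hx0.2⟩, hh⟩
    linarith [hy.2]
  have hu0 := (h.init hT).1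
  have hx0p : 0 < x0 := by
    rcases hx0.1.lt_or_eq with h' | h'
    · exact h'
    · rw [← h', hu0] at hx0u; linarith
  have hx0e : u x0 = 0 := by
    by_contra hne
    have hlt : u x0 < 0 := lt_of_le_of_ne hx0u hne
    obtain ⟨z, hz, hz0⟩ := intermediate_value_Icc' hx0.1 h.1.continuousOn
      (⟨hlt.le, by rw [hu0]; exact hc.le⟩ : (0:ℝ) ∈ Icc (u x0) (u 0))
    have := hleast ⟨⟨hz.1, hz.2.trans hx0.2⟩, hz0.le⟩
    have : z = x0 := le_antisymm hz.2 this
    subst this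
    exact hne hz0
  have hw0 : w x0 < 0 := by
    by_contra hw
    push Not at hw
    have hprim : Continuous fun x => ∫ t in x..x0, |b t| := by
      have : Continuous fun x => ∫ t in x0..x, |b t| := intervalIntegral.continuous_primitive
        (fun a b => hb.abs.intervalIntegrable) x0
      refine this.neg.congr fun x => ?_
      rw [intervalIntegral.integral_symm x0 x]; simp
    have hlim : Tendsto (fun x => (∫ t in x..x0, |b t|) * (K * T)) (nhdsWithin x0 (Iio x0))
        (nhds 0) := by
      have := ((hprim.mul continuous_const).tendsto x0 : Tendsto (fun x => (∫ t in x..x0, |b t|) * (K * T)) _ _)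
      have e : (∫ t in x0..x0, |b t|) * (K * T) = 0 := by simp
      rw [← e]
      exact this.mono_left nhdsWithin_le_nhds
    obtain ⟨x1, hx1, hx1'⟩ := ((hlim.eventually (gt_mem_nhds (by norm_num : (0:ℝ) < 1/2))).and
      (Ioo_mem_nhdsLT hx0p)).exists
    obtain ⟨z, hz, hzm⟩ := (isCompact_Icc (a := x1) (b := x0)).exists_isMaxOn
        ⟨x1, le_rfl, hx1'.2.le⟩ h.1.continuousOn
    have hmax : ∀ t ∈ Icc x1 x0, u t ≤ u z := fun t ht => hzm ht
    have hzpos : 0 < u z := (hpos x1 ⟨hx1'.1.le, hx1'.2⟩).trans_le (hmax x1 ⟨le_rfl, hx1'.2.le⟩)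
    have hub : ∀ t ∈ Icc x1 x0, |f (u t)| ≤ K * u z := by
      intro t ht
      refine (hK _).trans (mul_le_mul_of_nonneg_left ?_ hK0)
      have : 0 ≤ u t := by
        rcases ht.2.lt_or_eq with h' | h'
        · exact (hpos t ⟨hx1'.1.le.trans ht.1, h'⟩).le
        · rw [h', hx0e]
      rw [abs_of_nonneg this]; exact hmax t ht
    set J := ∫ t in x1..x0, |b t| with hJ
    have hwge : ∀ t ∈ Icc z x0, -(J * (K * u z)) ≤ w t := by
      intro t ht
      have ht1 : t ∈ Icc x1 x0 := ⟨hz.1.trans ht.1, ht.2⟩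
      have htT : t ∈ Icc 0 T := ⟨hx1'.1.le.trans ht1.1, ht.2.trans hx0.2⟩
      have e := h.dw hb hf htT hx0
      have : |∫ s in t..x0, b s * f (u s)| ≤ J * (K * u z) := by
        calc _ ≤ ∫ s in t..x0, |b s * f (u s)| :=
              intervalIntegral.abs_integral_le_integral_abs ht.2
          _ ≤ ∫ s in t..x0, |b s| * (K * u z) := by
              refine intervalIntegral.integral_mono_on ht.2
                (ii_mul hb (hf.comp h.1) _ _).abs (hb.abs.mul_const _).intervalIntegrable
                fun s hs => ?_
              rw [abs_mul]
              exact mul_le_mul_of_nonneg_left (hub s ⟨ht1.1.trans hs.1, hs.2⟩) (abs_nonneg _)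
          _ = (∫ s in t..x0, |b s|) * (K * u z) := intervalIntegral.integral_mul_const _ _
          _ ≤ _ := by
              refine mul_le_mul_of_nonneg_right ?_ (by positivity)
              exact intervalIntegral.integral_mono_interval ht1.1 ht.2 le_rfl
                (ae_of_all _ fun t => abs_nonneg _) hb.abs.intervalIntegrable
      have := abs_le.1 this
      linarith
    have h1 := h.u_ge (hx1'.1.le.trans hz.1) hz.2 hx0.2 hwge
    have hJ0 : 0 ≤ J := intervalIntegral.integral_nonneg hx1'.2.le fun t _ => abs_nonneg _
    have h2 : J * (K * u z) * (x0 - z) ≤ J * (K * u z) * T :=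
      mul_le_mul_of_nonneg_left (by linarith [hx0.2, hz.1, hx1'.1]) (by positivity)
    have h3 : J * (K * u z) * T = J * (K * T) * u z := by ring
    have h4 : J * (K * T) * u z < 1/2 * u z := mul_lt_mul_of_pos_right hx1 hzpos
    linarith
  have key : ∀ t ∈ Icc x0 T, w t < w x0 / 2 := by
    refine boot h.2.1 (by linarith) fun t ht hy => ?_
    have hule : ∀ s ∈ Icc x0 t, u s ≤ 0 := by
      intro s hs
      have := h.u_le hx0.1 hs.1 (hs.2.trans ht.2) (m := w x0 / 2)
        (fun r hr => hy r ⟨hr.1, hr.2.trans hs.2⟩)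
      have h2 := mul_nonneg_of_nonpos_of_nonpos hw0.le (by linarith [hs.1] : -(s - x0) ≤ 0)
      nlinarith
    have e := h.dw hb hf hx0 ⟨hx0.1.trans ht.1, ht.2⟩
    have : ∫ s in x0..t, b s * f (u s) = 0 := by
      rw [intervalIntegral.integral_congr (g := fun _ => (0:ℝ))]
      · simp
      · intro s hs
        rw [uIcc_of_le ht.1] at hs
        simp [hfz _ (hule s hs)]
    rw [this] at e
    linarith
  refine ⟨?_, ?_⟩
  · have := h.u_le hx0.1 hx0.2 le_rfl (m := w x0 / 2) (fun r hr => (key r hr).le)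
    nlinarith [hx0.2]
  · linarith [key T ⟨hx0.2, le_rfl⟩]

lemma Sol.w_anti {T : ℝ} {b f : ℝ → ℝ} (hb : Integrable b) (hf : Continuous f)
    (hf0 : ∀ s, 0 ≤ f s) {c d : ℝ} {u w : ℝ → ℝ} (h : Sol T b f c d u w) {σ τ : ℝ}
    (hσ : 0 ≤ σ) (hτ : τ ≤ T) (hpos : ∀ᵐ x ∂(volume.restrict (Icc σ τ)), 0 ≤ b x) :
    ∀ x ∈ Icc σ τ, ∀ y ∈ Icc σ τ, x ≤ y → w y ≤ w x := by
  intro x hx y hy hxy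
  have e := h.dw hb hf ⟨hσ.trans hx.1, hx.2.trans hτ⟩ ⟨hσ.trans hy.1, hy.2.trans hτ⟩
  have : 0 ≤ ∫ t in x..y, b t * f (u t) := by
    refine intervalIntegral.integral_nonneg_of_ae_restrict hxy ?_
    filter_upwards [ae_restrict_of_ae_restrict_of_subset (Icc_subset_Icc hx.1 hy.2) hpos] with t ht
    exact mul_nonneg ht (hf0 _)
  linarith

def Bd (b : ℝ → ℝ) (σ τ L δ : ℝ) : Prop :=
  ∀ (T : ℝ) (f : ℝ → ℝ) (c d : ℝ) (u w : ℝ → ℝ) (R0 : ℝ), Sol T b f c d u w → 0 ≤ σ → τ ≤ T →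
    Continuous f → (∀ s, 0 ≤ f s) → (∀ s, R0 ≤ s → L * s ≤ f s) → 0 < R0 →
    (∀ x ∈ Icc σ τ, 0 ≤ u x) → ∀ x ∈ Icc σ τ, u x < R0 / δ

lemma Bd.mono {b : ℝ → ℝ} {σ τ L δ L' δ' : ℝ} (h : Bd b σ τ L δ) (hL : L ≤ L') (hδ' : 0 < δ')
    (hδ : δ' ≤ δ) : Bd b σ τ L' δ' := by
  intro T f c d u w R0 hS hσ hτ hf hf0 hfL hR0 hu x hx
  refine (h T f c d u w R0 hS hσ hτ hf hf0 (fun s hs => ?_) hR0 hu x hx).trans_le ?_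
  · exact (mul_le_mul_of_nonneg_right hL (by linarith)).trans (hfL s hs)
  · exact div_le_div_of_nonneg_left hR0.le hδ' hδ

lemma int_pos_of {b : ℝ → ℝ} (hb : Integrable b) {σ τ : ℝ}
    (hpos : ∀ᵐ x ∂(volume.restrict (Icc σ τ)), 0 ≤ b x)
    (hne : ¬ (∀ᵐ x ∂(volume.restrict (Icc σ τ)), b x = 0)) :
    σ < τ ∧ 0 < ∫ t in σ..τ, b t := by
  have hστ : σ < τ := by
    by_contra hc
    push Not at hc
    apply hne
    have : volume.restrict (Icc σ τ) = 0 := by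
      rw [Measure.restrict_eq_zero, Real.volume_Icc]
      simp [hc]
    rw [this]; simp
  refine ⟨hστ, ?_⟩
  rw [intervalIntegral.integral_of_le hστ.le, ← integral_Icc_eq_integral_Ioc]
  rcases (integral_nonneg_of_ae hpos).lt_or_eq with h | h
  · exact h
  · exfalso
    apply hne
    exact (integral_eq_zero_iff_of_nonneg_ae hpos hb.restrict).1 h.symm

lemma bd_exists {b : ℝ → ℝ} (hb : Integrable b) {σ τ : ℝ}
    (hpos : ∀ᵐ x ∂(volume.restrict (Icc σ τ)), 0 ≤ b x)
    (hne : ¬ (∀ᵐ x ∂(volume.restrict (Icc σ τ)), b x = 0)) :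
    ∃ L δ : ℝ, 0 < δ ∧ Bd b σ τ L δ := by
  obtain ⟨hστ, hint⟩ := int_pos_of hb hpos hne
  -- choose h
  have hcont : Continuous fun h => ∫ t in (σ + h)..(τ - h), b t := by
    have hp : Continuous fun x => ∫ t in (0:ℝ)..x, b t := intervalIntegral.continuous_primitive
      (fun a b => hb.intervalIntegrable) 0
    have : (fun h => ∫ t in (σ + h)..(τ - h), b t) = fun h =>
        (∫ t in (0:ℝ)..(τ - h), b t) - ∫ t in (0:ℝ)..(σ + h), b t := by
      funext h
      rw [intervalIntegral.integral_interval_sub_left hb.intervalIntegrable hb.intervalIntegrable]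
    rw [this]
    exact (hp.comp (by fun_prop)).sub (hp.comp (by fun_prop))
  have hlim : Tendsto (fun h => ∫ t in (σ + h)..(τ - h), b t) (nhdsWithin 0 (Ioi 0))
      (nhds (∫ t in σ..τ, b t)) := by
    have := hcont.tendsto 0
    simp only [add_zero, sub_zero] at this
    exact this.mono_left nhdsWithin_le_nhds
  obtain ⟨l, hl, hl'⟩ := ((hlim.eventually (lt_mem_nhds hint)).and
      (Ioo_mem_nhdsGT (show (0:ℝ) < (τ - σ) / 2 by linarith))).exists
  obtain ⟨hl0, hl2⟩ := hl'
  set α := σ + l with hα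
  set β := τ - l with hβ
  set m := ∫ t in α..β, b t with hm
  have hm0 : 0 < m := hl
  have hαβ : α ≤ β := by linarith
  set δ := l / (τ - σ) with hδ
  have hw : 0 < τ - σ := by linarith
  have hδ0 : 0 < δ := by positivity
  refine ⟨2 / (l * δ * m) + 1, δ, hδ0, ?_⟩
  intro T f c d u w R0 hS hσ hτ hf hf0 hfL hR0 hu
  have hanti := hS.w_anti hb hf hf0 hσ hτ hpos
  obtain ⟨z, hz, hzm⟩ := (isCompact_Icc (a := σ) (b := τ)).exists_isMaxOn
        ⟨σ, le_rfl, hστ.le⟩ hS.1.continuousOn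
  have hmax : ∀ t ∈ Icc σ τ, u t ≤ u z := fun t ht => hzm ht
  suffices hh : u z < R0 / δ from fun x hx => (hmax x hx).trans_lt hh
  by_contra hcon
  push Not at hcon
  rw [div_le_iff₀ hδ0] at hcon
  set M := u z with hM
  have hM0 : 0 < M := by
    by_contra hc
    push Not at hc
    nlinarith
  have hσm : σ ∈ Icc σ τ := ⟨le_rfl, hστ.le⟩
  have hτm : τ ∈ Icc σ τ := ⟨hστ.le, le_rfl⟩
  -- slopes
  have up : ∀ x ∈ Icc σ τ, ∀ y ∈ Icc σ τ, x ≤ y → u y - u x ≤ w x * (y - x) := by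
    intro x hx y hy hxy
    exact hS.u_le (hσ.trans hx.1) hxy (hy.2.trans hτ) fun t ht =>
      hanti x hx t ⟨hx.1.trans ht.1, ht.2.trans hy.2⟩ ht.1
  have lo : ∀ x ∈ Icc σ τ, ∀ y ∈ Icc σ τ, x ≤ y → w y * (y - x) ≤ u y - u x := by
    intro x hx y hy hxy
    exact hS.u_ge (hσ.trans hx.1) hxy (hy.2.trans hτ) fun t ht =>
      hanti t ⟨hx.1.trans ht.1, ht.2.trans hy.2⟩ y hy ht.2
  have hlow : ∀ x ∈ Icc α β, δ * M ≤ u x := by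
    intro x hx
    have hxm : x ∈ Icc σ τ := ⟨by linarith [hx.1], by linarith [hx.2]⟩
    have hux := hu x hxm
    have goal : l * M ≤ u x * (τ - σ) := by
      rcases le_total x z with hxz | hxz
      · have h1 := up x hxm z hz hxz
        have h2 := lo σ hσm x hxm hxm.1
        have h3 := hu σ hσm
        have hxs : l ≤ x - σ := by linarith [hx.1]
        rcases le_total (w x) 0 with hw0 | hw0
        · have : w x * (z - x) ≤ 0 := mul_nonpos_of_nonpos_of_nonneg hw0 (by linarith)
          nlinarith
        · have h4 : w x * (x - σ) ≤ u x := by linarith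
          have h5 : (M - u x) * (x - σ) ≤ w x * (z - x) * (x - σ) :=
            mul_le_mul_of_nonneg_right h1 (by linarith)
          have h6 : w x * (x - σ) * (z - x) ≤ u x * (z - x) :=
            mul_le_mul_of_nonneg_right h4 (by linarith)
          have h7 : M * (x - σ) ≤ u x * (z - σ) := by nlinarith
          have h8 : u x * (z - σ) ≤ u x * (τ - σ) :=
            mul_le_mul_of_nonneg_left (by linarith [hz.2]) hux
          nlinarith
      · have h1 := lo z hz x hxm hxz
        have h2 := up x hxm τ hτm hxm.2
        have h3 := hu τ hτm
        have hxs : l ≤ τ - x := by linarith [hx.2]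
        rcases le_total 0 (w x) with hw0 | hw0
        · have : 0 ≤ w x * (x - z) := mul_nonneg hw0 (by linarith)
          nlinarith
        · have h4 : -(w x) * (τ - x) ≤ u x := by linarith
          have h5 : (M - u x) * (τ - x) ≤ -(w x) * (x - z) * (τ - x) :=
            mul_le_mul_of_nonneg_right (by linarith) (by linarith)
          have h6 : -(w x) * (τ - x) * (x - z) ≤ u x * (x - z) :=
            mul_le_mul_of_nonneg_right h4 (by linarith)
          have h7 : M * (τ - x) ≤ u x * (τ - z) := by nlinarith
          have h8 : u x * (τ - z) ≤ u x * (τ - σ) :=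
            mul_le_mul_of_nonneg_left (by linarith [hz.1]) hux
          nlinarith
    rw [hδ, div_mul_eq_mul_div, div_le_iff₀ hw]
    exact goal
  have hαm : α ∈ Icc σ τ := ⟨by linarith, by linarith⟩
  have hβm : β ∈ Icc σ τ := ⟨by linarith, by linarith⟩
  have s1 : w α * l ≤ M := by
    have := lo σ hσm α hαm hαm.1
    have h3 := hu σ hσm
    have h4 := hmax α hαm
    have : α - σ = l := by rw [hα]; ring
    nlinarith
  have s2 : -(w β) * l ≤ M := by
    have := up β hβm τ hτm hβm.2
    have h3 := hu τ hτm
    have h4 := hmax β hβm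
    have : τ - β = l := by rw [hβ]; ring
    nlinarith
  set L := 2 / (l * δ * m) + 1 with hL
  have hL0 : 0 < L := by positivity
  have e := hS.dw hb hf (x := α) (y := β) ⟨hσ.trans hαm.1, hαm.2.trans hτ⟩
    ⟨hσ.trans hβm.1, hβm.2.trans hτ⟩
  have hlowint : m * (L * (δ * M)) ≤ ∫ t in α..β, b t * f (u t) := by
    rw [hm, ← intervalIntegral.integral_mul_const]
    refine intervalIntegral.integral_mono_ae_restrict hαβ (hb.mul_const _).intervalIntegrable
      (ii_mul hb (hf.comp hS.1) _ _) ?_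
    filter_upwards [ae_restrict_of_ae_restrict_of_subset (Icc_subset_Icc hαm.1 hβm.2) hpos,
      ae_restrict_mem measurableSet_Icc] with t ht htm
    refine mul_le_mul_of_nonneg_left ?_ ht
    have h1 := hlow t htm
    have h2 : R0 ≤ u t := by linarith [mul_comm M δ]
    exact (mul_le_mul_of_nonneg_left h1 hL0.le).trans (hfL _ h2)
  have hLv : L * (l * δ * m) = 2 + l * δ * m := by
    rw [hL, add_mul, div_mul_cancel₀ _ (by positivity)]; ring
  have h9 : m * (L * (δ * M)) * l = (2 + l * δ * m) * M := by rw [← hLv]; ring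
  have h10 : m * (L * (δ * M)) * l ≤ (w α - w β) * l :=
    mul_le_mul_of_nonneg_right (by linarith) hl0.le
  have h11 : 0 < l * δ * m * M := by positivity
  nlinarith

structure FH (f : ℝ → ℝ) (K : ℝ) : Prop where
  cont : Continuous f
  nonneg : ∀ s, 0 ≤ f s
  zero : ∀ s ≤ 0, f s = 0
  pos : ∀ s, 0 < s → 0 < f s
  K0 : 0 ≤ K
  lin : ∀ s, |f s| ≤ K * |s|
  small : ∀ ε > 0, ∃ δ > (0:ℝ), ∀ s, 0 < s → s < δ → f s ≤ ε * s
  reg : RegOscAtZero f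

lemma Sol.rev {T : ℝ} (hT : 0 ≤ T) {b f : ℝ → ℝ} (hb : Integrable b) (hf : Continuous f)
    {c d : ℝ} {u w : ℝ → ℝ} (h : Sol T b f c d u w) :
    Sol T (fun x => b (T - x)) f (u T) (-w T) (fun x => u (T - x)) (fun x => -w (T - x)) := by
  refine ⟨h.1.comp (by fun_prop), (h.2.1.comp (by fun_prop)).neg, fun x hx => ⟨?_, ?_⟩⟩
  · have e := h.du (x := T - x) (y := T) ⟨by linarith [hx.2], by linarith [hx.1]⟩ ⟨hT, le_rfl⟩
    rw [intervalIntegral.integral_neg, intervalIntegral.integral_comp_sub_left (fun t => w t)]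
    simp only [sub_zero]
    linarith
  · have e := h.dw hb hf (x := T - x) (y := T) ⟨by linarith [hx.2], by linarith [hx.1]⟩ ⟨hT, le_rfl⟩
    rw [intervalIntegral.integral_comp_sub_left (fun t => b t * f (u t))]
    simp only [sub_zero]
    linarith

lemma FH.bd {f : ℝ → ℝ} {K : ℝ} (F : FH f K) {ε δ M : ℝ} (hε : 0 ≤ ε) (hM : 0 ≤ M)
    (hδ : ∀ s, 0 < s → s < δ → f s ≤ ε * s) (hMδ : M < δ) {s : ℝ} (hs : s ≤ M) :
    |f s| ≤ ε * M := by
  rw [abs_of_nonneg (F.nonneg s)]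
  rcases le_or_gt s 0 with h | h
  · rw [F.zero s h]; positivity
  · exact (hδ s h (by linarith)).trans (mul_le_mul_of_nonneg_left hs hε)

lemma wdiff {T : ℝ} {b f : ℝ → ℝ} (hb : Integrable b) (hf : Continuous f)
    {c d : ℝ} {u w : ℝ → ℝ} (h : Sol T b f c d u w) {B : ℝ} (hB0 : 0 ≤ B) {x : ℝ}
    (hx : x ∈ Icc 0 T) (hB : ∀ t ∈ Icc 0 x, |f (u t)| ≤ B) : |w x - d| ≤ (∫ t, |b t|) * B := by
  rw [(h.2.2 x hx).2]
  have := abs_int_le hb (hf.comp h.1) hx.1 hB0 hB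
  simp only [Function.comp] at this
  rw [← abs_neg]
  convert this using 2
  ring

lemma small_lin {T : ℝ} (hT : 0 < T) {b f : ℝ → ℝ} (hb : Integrable b) {K : ℝ} (F : FH f K)
    {ε' : ℝ} (hε' : 0 < ε') (hε1 : ε' ≤ 1) : ∃ r0 > (0:ℝ), ∀ r, 0 < r → r < r0 → ∀ d u w,
    |d| * T ≤ 3 * r → Sol T b f r d u w → ∀ x ∈ Icc 0 T, |u x - r - d * x| < ε' * r := by
  set N := ∫ t, |b t| with hN
  have hN0 : 0 ≤ N := integral_nonneg fun t => abs_nonneg _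
  set ε := ε' / (5 * N * T + 1) with hε
  have hε0 : 0 < ε := by positivity
  have hεv : ε * (5 * N * T) < ε' := by
    have : ε * (5 * N * T + 1) = ε' := div_mul_cancel₀ _ (by positivity)
    linarith
  obtain ⟨δ, hδ0, hδ⟩ := F.small ε hε0
  refine ⟨δ / 5, by positivity, fun r hr0 hr d u w hd h => ?_⟩
  have hini := h.init hT.le
  refine boot (φ := fun x => |u x - r - d * x|) ?_ ?_ fun x hx hy => ?_
  · have := h.1; fun_prop
  · simp [hini.1]; positivity
  have hub : ∀ y ∈ Icc 0 x, u y ≤ 5 * r := by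
    intro y hy'
    have h1 := (abs_le.1 (hy y hy')).2
    have h2 : d * y ≤ |d| * T := mul_le_mul (le_abs_self d) (hy'.2.trans hx.2) hy'.1 (abs_nonneg _)
    have h3 : ε' * r ≤ r := by nlinarith
    linarith
  have hw : ∀ y ∈ Icc 0 x, |w y - d| ≤ N * (ε * (5 * r)) := by
    intro y hy'
    refine wdiff hb F.cont h (by positivity) ⟨hy'.1, hy'.2.trans hx.2⟩ fun t ht => ?_
    exact F.bd hε0.le (by positivity) hδ (by linarith) (hub t ⟨ht.1, ht.2.trans hy'.2⟩)
  have h1 := h.u_le le_rfl hx.1 hx.2 (m := d + N * (ε * (5 * r)))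
    fun t ht => by linarith [(abs_le.1 (hw t ht)).2]
  have h2 := h.u_ge le_rfl hx.1 hx.2 (m := d - N * (ε * (5 * r)))
    fun t ht => by linarith [(abs_le.1 (hw t ht)).1]
  rw [hini.1] at h1 h2
  have h3 : N * (ε * (5 * r)) * x ≤ N * (ε * (5 * r)) * T :=
    mul_le_mul_of_nonneg_left hx.2 (by positivity)
  have h4 : N * (ε * (5 * r)) * T = ε * (5 * N * T) * r := by ring
  have h5 : ε * (5 * N * T) * r < ε' * r := mul_lt_mul_of_pos_right hεv hr0
  rw [abs_lt]
  constructor <;> nlinarith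

lemma smallr_neg {T : ℝ} (hT : 0 < T) {b f : ℝ → ℝ} (hb : Integrable b) {K : ℝ} (F : FH f K) :
    ∃ r0 > (0:ℝ), ∀ r, 0 < r → r < r0 → ∀ d u w,
    d ≤ - (3 * r / T) → Sol T b f r d u w → ∃ x ∈ Icc 0 T, u x ≤ 0 := by
  set N := ∫ t, |b t| with hN
  have hN0 : 0 ≤ N := integral_nonneg fun t => abs_nonneg _
  set ε := 1 / (2 * N * T + 1) with hε
  have hε0 : 0 < ε := by positivity
  have hεv : ε * (2 * N * T) < 1 := by
    have : ε * (2 * N * T + 1) = 1 := div_mul_cancel₀ _ (by positivity)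
    linarith
  obtain ⟨δ, hδ0, hδ⟩ := F.small ε hε0
  refine ⟨δ / 2, by positivity, fun r hr0 hr d u w hd h => ?_⟩
  by_contra hc
  push Not at hc
  have hini := h.init hT.le
  have hdT : d * T ≤ - (3 * r) := by
    have := mul_le_mul_of_nonneg_right hd hT.le
    rwa [neg_mul, div_mul_cancel₀ _ hT.ne'] at this
  have step : ∀ x ∈ Icc 0 T, (∀ y ∈ Icc 0 x, u y ≤ 2 * r) → u x * T ≤ r * T - 2 * r * x := by
    intro x hx hy
    have hw : ∀ y ∈ Icc 0 x, |w y - d| ≤ N * (ε * (2 * r)) := by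
      intro y hy'
      refine wdiff hb F.cont h (by positivity) ⟨hy'.1, hy'.2.trans hx.2⟩ fun t ht => ?_
      exact F.bd hε0.le (by positivity) hδ (by linarith) (hy t ⟨ht.1, ht.2.trans hy'.2⟩)
    have h1 := h.u_le le_rfl hx.1 hx.2 (m := d + N * (ε * (2 * r)))
      fun t ht => by linarith [(abs_le.1 (hw t ht)).2]
    rw [hini.1, sub_zero] at h1
    have h4 : N * (ε * (2 * r)) * T = ε * (2 * N * T) * r := by ring
    have h5 : ε * (2 * N * T) * r ≤ 1 * r := mul_le_mul_of_nonneg_right hεv.le hr0.le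
    have h6 : (d + N * (ε * (2 * r))) * T ≤ - (2 * r) := by linarith [add_mul d (N * (ε * (2 * r))) T]
    have h7 := mul_le_mul_of_nonneg_right h6 hx.1
    have h8 := mul_le_mul_of_nonneg_right h1 hT.le
    linarith
  have hall : ∀ x ∈ Icc 0 T, u x < 2 * r := by
    refine boot h.1 (by rw [hini.1]; linarith) fun x hx hy => ?_
    have h1 := step x hx hy
    have h2 : 0 ≤ 2 * r * x := by have := hx.1; positivity
    have h3 : u x * T ≤ r * T := by linarith
    have := le_of_mul_le_mul_right h3 hT
    linarith
  have h1 := step T ⟨hT.le, le_rfl⟩ fun y hy => (hall y hy).le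
  have h2 := mul_pos (hc T ⟨hT.le, le_rfl⟩) hT
  nlinarith [mul_pos hr0 hT]

lemma small_all {T : ℝ} (hT : 0 < T) {b f : ℝ → ℝ} (hb : Integrable b) {K : ℝ} (F : FH f K)
    (hneg : ∫ t in (0:ℝ)..T, b t < 0) : ∃ r0 > (0:ℝ), ∀ r, 0 < r → r < r0 → ∀ d u w,
    Sol T b f r d u w → (d ≤ - (3 * r / T) → ∃ x ∈ Icc 0 T, u x ≤ 0) ∧
      (d = 3 * r / T → r < u T) ∧ (|d| ≤ 3 * r / T → d = 0 ∨ u T = r → d < w T) ∧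
      (3 * r / T ≤ d → u T = r → w T < d) := by
  obtain ⟨r1, hr1, H1⟩ := smallr_neg hT hb F
  have hb' : Integrable fun x => b (T - x) := hb.comp_sub_left T
  obtain ⟨r2, hr2, H2⟩ := smallr_neg hT hb' F
  obtain ⟨r3, hr3, H3⟩ := small_lin hT hb F one_pos le_rfl
  set N := ∫ t, |b t| with hN
  have hN0 : 0 ≤ N := integral_nonneg fun t => abs_nonneg _
  set I := -∫ t in (0:ℝ)..T, b t with hI
  have hI0 : 0 < I := by rw [hI]; linarith
  set e2 := I / (N + 1) with he2
  have he20 : 0 < e2 := by positivity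
  have he2v : e2 * N < I := by
    have : e2 * (N + 1) = I := div_mul_cancel₀ _ (by positivity)
    linarith
  obtain ⟨δ, hδ0, η, hη0, hreg⟩ := F.reg e2 he20
  obtain ⟨r4, hr4, H4⟩ := small_lin hT hb F (ε' := min (η / 2) 1) (by positivity) (min_le_right _ _)
  refine ⟨min (min r1 r2) (min (min r3 r4) δ), by positivity, fun r hr0 hr d u w h => ?_⟩
  simp only [lt_min_iff] at hr
  obtain ⟨⟨h1, h2⟩, ⟨h3, h4⟩, h5⟩ := hr
  refine ⟨fun hd => H1 r hr0 h1 d u w hd h, fun hd => ?_, fun hd hor => ?_, fun hd hu => ?_⟩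
  · have hdT : d * T = 3 * r := by rw [hd, div_mul_cancel₀ _ hT.ne']
    have := H3 r hr0 h3 d u w (by rw [abs_of_nonneg (by rw [hd]; positivity)]; exact hdT.le) h T
      ⟨hT.le, le_rfl⟩
    have := (abs_lt.1 this).1
    linarith
  · have hdT : |d| * T ≤ 3 * r := by
      have := mul_le_mul_of_nonneg_right hd hT.le
      rwa [div_mul_cancel₀ _ hT.ne'] at this
    have key := H4 r hr0 h4 d u w hdT h
    set e' := min (η / 2) 1 with he'
    have he'1 : e' ≤ η / 2 := min_le_left _ _
    have hdx : |d| * T ≤ e' * r := by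
      rcases hor with h0 | h0
      · rw [h0]; simp; positivity
      · have := key T ⟨hT.le, le_rfl⟩
        rw [h0] at this
        simp only [sub_self, zero_sub, abs_neg, abs_mul, abs_of_pos hT] at this
        exact this.le
    have hclose : ∀ x ∈ Icc 0 T, |f (u x) - f r| ≤ e2 * f r := by
      intro x hx
      have k1 := key x hx
      have k2 : |d * x| ≤ e' * r := by
        rw [abs_mul, abs_of_nonneg hx.1]
        exact (mul_le_mul_of_nonneg_left hx.2 (abs_nonneg _)).trans hdx
      have k3 : |u x - r| < η * r := by
        have := abs_add_le (u x - r - d * x) (d * x)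
        rw [sub_add_cancel] at this
        nlinarith
      have k4 : |u x / r - 1| < η := by
        rw [← div_self hr0.ne', ← sub_div, abs_div, abs_of_pos hr0, div_lt_iff₀ hr0]
        exact k3
      have k5 := hreg r (u x / r) hr0 h5 k4
      rw [div_mul_cancel₀ _ hr0.ne'] at k5
      have hfr := F.pos r hr0
      have e : f (u x) - f r = (f (u x) / f r - 1) * f r := by
        field_simp
      rw [e, abs_mul, abs_of_pos hfr]
      exact mul_le_mul_of_nonneg_right k5.le hfr.le
    have hfr := F.pos r hr0
    have hcc : Continuous fun t => f (u t) - f r := (F.cont.comp h.1).sub continuous_const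
    have B := abs_int_le hb hcc hT.le (by positivity) hclose
    have e : ∫ t in (0:ℝ)..T, b t * (f (u t) - f r) =
        (∫ t in (0:ℝ)..T, b t * f (u t)) - (∫ t in (0:ℝ)..T, b t) * f r := by
      have hi : IntervalIntegrable (fun t => b t * f (u t)) volume 0 T :=
        ii_mul hb (F.cont.comp h.1) 0 T
      rw [← intervalIntegral.integral_mul_const, ← intervalIntegral.integral_sub hi
        (hb.mul_const _).intervalIntegrable]
      congr 1; funext t; ring
    rw [e] at B
    have B2 := (abs_le.1 B).2
    have hw := (h.2.2 T ⟨hT.le, le_rfl⟩).2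
    have : e2 * N * f r < I * f r := mul_lt_mul_of_pos_right he2v hfr
    have hI' : (∫ t in (0:ℝ)..T, b t) = -I := by rw [hI]; ring
    rw [hI'] at B2
    rw [hw]
    nlinarith
  · by_contra hc
    push Not at hc
    have hrev := h.rev hT.le hb F.cont
    rw [hu] at hrev
    obtain ⟨x, hx, hux⟩ := H2 r hr0 h2 (-w T) _ _ (by linarith) hrev
    have := (h.cross hb F.cont F.K0 F.lin F.zero hr0 (x := T - x)
      ⟨by linarith [hx.2], by linarith [hx.1]⟩ hux).1
    linarith

lemma Sol.fin {T : ℝ} {b f : ℝ → ℝ} (hb : Integrable b) (hf : Continuous f)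
    (hf0 : ∀ s, 0 ≤ f s) {c d : ℝ} {u w : ℝ → ℝ} (h : Sol T b f c d u w) {J : Set ℝ}
    (hJT : J ⊆ Icc 0 T) (hJne : J.Nonempty)
    (hneg : ∀ᵐ x ∂(volume.restrict (Icc 0 T \ J)), b x ≤ 0) {R x0 : ℝ}
    (hJ : ∀ x ∈ J, u x ≤ R) (hx0 : x0 ∈ Icc 0 T) (hw : w x0 = 0) (hu : R < u x0) : False := by
  obtain ⟨j, hj⟩ := hJne
  rcases le_total x0 j with hxj | hxj
  · have hK : IsCompact (Icc x0 T ∩ u ⁻¹' Iic R) :=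
      isCompact_Icc.inter_right (isClosed_Iic.preimage h.1)
    obtain ⟨y, ⟨hy, hyR⟩, hleast⟩ := hK.exists_isLeast ⟨j, ⟨hxj, (hJT hj).2⟩, hJ j hj⟩
    have hyR : u y ≤ R := hyR
    have hsub : Ico x0 y ⊆ Icc 0 T \ J := by
      intro t ht
      refine ⟨⟨hx0.1.trans ht.1, ht.2.le.trans hy.2⟩, fun htJ => ?_⟩
      have := hleast ⟨⟨ht.1, ht.2.le.trans hy.2⟩, hJ t htJ⟩
      linarith [ht.2]
    have hae : ∀ᵐ x ∂(volume.restrict (Icc x0 y)), b x ≤ 0 := by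
      rw [← restrict_Ico_eq_restrict_Icc]
      exact ae_restrict_of_ae_restrict_of_subset hsub hneg
    have hwt : ∀ t ∈ Icc x0 y, 0 ≤ w t := by
      intro t ht
      have e := h.dw hb hf hx0 (y := t) ⟨hx0.1.trans ht.1, ht.2.trans hy.2⟩
      have : 0 ≤ ∫ s in x0..t, -(b s * f (u s)) := by
        refine intervalIntegral.integral_nonneg_of_ae_restrict ht.1 ?_
        filter_upwards [ae_restrict_of_ae_restrict_of_subset (Icc_subset_Icc le_rfl ht.2) hae]
          with s hs
        have := mul_nonpos_of_nonpos_of_nonneg hs (hf0 (u s))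
        simpa using this
      rw [intervalIntegral.integral_neg] at this
      linarith
    have := h.u_ge hx0.1 hy.1 hy.2 hwt
    linarith
  · have hK : IsCompact (Icc 0 x0 ∩ u ⁻¹' Iic R) :=
      isCompact_Icc.inter_right (isClosed_Iic.preimage h.1)
    obtain ⟨y, ⟨hy, hyR⟩, hleast⟩ := hK.exists_isGreatest ⟨j, ⟨(hJT hj).1, hxj⟩, hJ j hj⟩
    have hyR : u y ≤ R := hyR
    have hsub : Ioc y x0 ⊆ Icc 0 T \ J := by
      intro t ht
      refine ⟨⟨hy.1.trans ht.1.le, ht.2.trans hx0.2⟩, fun htJ => ?_⟩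
      have := hleast ⟨⟨hy.1.trans ht.1.le, ht.2⟩, hJ t htJ⟩
      linarith [ht.1]
    have hae : ∀ᵐ x ∂(volume.restrict (Icc y x0)), b x ≤ 0 := by
      rw [← restrict_Ioc_eq_restrict_Icc]
      exact ae_restrict_of_ae_restrict_of_subset hsub hneg
    have hwt : ∀ t ∈ Icc y x0, w t ≤ 0 := by
      intro t ht
      have e := h.dw hb hf (x := t) ⟨hy.1.trans ht.1, ht.2.trans hx0.2⟩ hx0
      have : 0 ≤ ∫ s in t..x0, -(b s * f (u s)) := by
        refine intervalIntegral.integral_nonneg_of_ae_restrict ht.2 ?_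
        filter_upwards [ae_restrict_of_ae_restrict_of_subset (Icc_subset_Icc ht.1 le_rfl) hae]
          with s hs
        have := mul_nonpos_of_nonpos_of_nonneg hs (hf0 (u s))
        simpa using this
      rw [intervalIntegral.integral_neg] at this
      linarith
    have := h.u_le hy.1 hy.2 hx0.2 hwt
    linarith

lemma Sol.max_right {T : ℝ} {b f : ℝ → ℝ} {c d : ℝ} {u w : ℝ → ℝ} (h : Sol T b f c d u w)
    {z : ℝ} (hz : z ∈ Icc 0 T) (hmax : ∀ t ∈ Icc 0 T, u t ≤ u z) (hzT : z < T) : w z ≤ 0 := by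
  by_contra hc
  push Not at hc
  have h1 := h.2.1.continuousAt.eventually (lt_mem_nhds (show w z / 2 < w z by linarith))
  obtain ⟨ε, hε, h2⟩ := Metric.eventually_nhds_iff.1 h1
  set y := min T (z + ε / 2) with hy
  have hzy : z < y := lt_min hzT (by linarith)
  have hy2 : y ≤ z + ε / 2 := min_le_right _ _
  have := h.u_ge hz.1 hzy.le (min_le_left _ _) (m := w z / 2) (fun t ht => (h2 (by
    rw [Real.dist_eq, abs_lt]; constructor <;> linarith [ht.1, ht.2])).le)
  have h3 := hmax y ⟨hz.1.trans hzy.le, min_le_left _ _⟩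
  nlinarith

lemma Sol.max_left {T : ℝ} {b f : ℝ → ℝ} {c d : ℝ} {u w : ℝ → ℝ} (h : Sol T b f c d u w)
    {z : ℝ} (hz : z ∈ Icc 0 T) (hmax : ∀ t ∈ Icc 0 T, u t ≤ u z) (hzT : 0 < z) : 0 ≤ w z := by
  by_contra hc
  push Not at hc
  have h1 := h.2.1.continuousAt.eventually (gt_mem_nhds (show w z < w z / 2 by linarith))
  obtain ⟨ε, hε, h2⟩ := Metric.eventually_nhds_iff.1 h1
  set y := max 0 (z - ε / 2) with hy
  have hzy : y < z := max_lt hzT (by linarith)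
  have hy2 : z - ε / 2 ≤ y := le_max_right _ _
  have := h.u_le (le_max_left _ _) hzy.le hz.2 (m := w z / 2) (fun t ht => (h2 (by
    rw [Real.dist_eq, abs_lt]; constructor <;> linarith [ht.1, ht.2])).le)
  have h3 := hmax y ⟨le_max_left _ _, hzy.le.trans hz.2⟩
  nlinarith

lemma Sol.apriori {T : ℝ} (hT : 0 < T) {b f : ℝ → ℝ} (hb : Integrable b) (hf : Continuous f)
    (hf0 : ∀ s, 0 ≤ f s) {c d : ℝ} {u w : ℝ → ℝ} (h : Sol T b f c d u w) {J : Set ℝ}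
    (hJT : J ⊆ Icc 0 T) (hJne : J.Nonempty)
    (hneg : ∀ᵐ x ∂(volume.restrict (Icc 0 T \ J)), b x ≤ 0) {R : ℝ}
    (hJ : ∀ x ∈ J, u x ≤ R) (hbc : (w 0 = 0 ∧ w T = 0) ∨ (u 0 = u T ∧ w 0 = w T)) :
    ∀ x ∈ Icc 0 T, u x ≤ R := by
  obtain ⟨z, hz, hzm⟩ := (isCompact_Icc (a := 0) (b := T)).exists_isMaxOn
        ⟨0, le_rfl, hT.le⟩ h.1.continuousOn
  have hmax : ∀ t ∈ Icc 0 T, u t ≤ u z := fun t ht => hzm ht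
  have h0 : (0:ℝ) ∈ Icc 0 T := ⟨le_rfl, hT.le⟩
  have hTm : T ∈ Icc 0 T := ⟨hT.le, le_rfl⟩
  have hw : w z = 0 := by
    rcases hz.1.lt_or_eq with h1 | h1
    · rcases hz.2.lt_or_eq with h2 | h2
      · exact le_antisymm (h.max_right hz hmax h2) (h.max_left hz hmax h1)
      · subst h2
        rcases hbc with hbc | hbc
        · exact hbc.2
        · have := h.max_right h0 (by rw [hbc.1]; exact hmax) hT
          have := h.max_left hz hmax h1
          linarith [hbc.2]
    · subst h1
      rcases hbc with hbc | hbc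
      · exact hbc.1
      · have := h.max_left hTm (by rw [← hbc.1]; exact hmax) hT
        have := h.max_right hz hmax hT
        linarith [hbc.2]
  intro x hx
  by_contra hc
  push Not at hc
  exact h.fin hb hf hf0 hJT hJne hneg hJ hz hw (hc.trans_le (hmax x hx))

lemma f_exists {g : ℝ → ℝ} (hg1 : CondG1 g) (hreg : RegOscAtZero g)
    (hg0 : Tendsto (fun s => g s / s) (nhdsWithin 0 (Ioi 0)) (nhds 0)) {L R0 R : ℝ}
    (hL : ∀ s, R0 ≤ s → L * s ≤ g s) (hR0 : 0 < R0) (hR : 0 < R) :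
    ∃ f K, FH f K ∧ (∀ s, 0 ≤ s → s ≤ R → f s = g s) ∧ ∀ s, R0 ≤ s → L * s ≤ f s := by
  obtain ⟨hc, hnn, hz, hpos⟩ := hg1
  have small : ∀ ε > 0, ∃ δ > (0:ℝ), ∀ s, 0 < s → s < δ → g s ≤ ε * s := by
    intro ε hε
    have h1 := hg0.eventually (gt_mem_nhds hε)
    obtain ⟨δ, hδ, h2⟩ := (mem_nhdsGT_iff_exists_Ioo_subset).1 h1
    refine ⟨δ, hδ, fun s hs hsδ => ?_⟩
    have : g s / s < ε := h2 ⟨hs, hsδ⟩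
    rw [div_lt_iff₀ hs] at this
    exact this.le
  obtain ⟨δ1, hδ1, hs1⟩ := small 1 one_pos
  obtain ⟨B, hB⟩ := (isCompact_Icc (a := (0:ℝ)) (b := R)).exists_bound_of_continuousOn
    (hc.mono Icc_subset_Ici_self)
  have hB0 : 0 ≤ B := (norm_nonneg _).trans (hB 0 ⟨le_rfl, hR.le⟩)
  set K := 1 + B / δ1 + |L| with hK
  have hK1 : 1 + B / δ1 ≤ K := by rw [hK]; linarith [abs_nonneg L]
  have hBd : 0 ≤ B / δ1 := by positivity
  have hKL : L ≤ K := by rw [hK]; linarith [le_abs_self L]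
  have hK0 : 0 < K := by linarith
  have hgK : ∀ s, 0 ≤ s → s ≤ R → g s ≤ K * s := by
    intro s hs hsR
    rcases hs.lt_or_eq with h0 | h0
    · rcases lt_or_ge s δ1 with h | h
      · have := hs1 s h0 h
        nlinarith
      · have h1 := (le_abs_self _).trans (hB s ⟨hs, hsR⟩)
        have h2 : B / δ1 * δ1 = B := div_mul_cancel₀ _ hδ1.ne'
        have h3 : B / δ1 * δ1 ≤ B / δ1 * s := mul_le_mul_of_nonneg_left h hBd
        nlinarith
    · rw [← h0, hz]; simp
  set f : ℝ → ℝ := fun s => min (g (max s 0)) (K * max s 0) with hf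
  have fpos : ∀ s, 0 ≤ s → f s = min (g s) (K * s) := fun s hs => by
    simp only [hf, max_eq_left hs]
  have feq : ∀ s, 0 ≤ s → s ≤ R → f s = g s := fun s hs hsR => by
    rw [fpos s hs, min_eq_left (hgK s hs hsR)]
  have fz : ∀ s ≤ 0, f s = 0 := fun s hs => by
    simp only [hf, max_eq_right hs, hz]; simp
  have fnn : ∀ s, 0 ≤ f s := fun s =>
    le_min (hnn _ (le_max_right _ _)) (mul_nonneg hK0.le (le_max_right _ _))
  refine ⟨f, K, ⟨?_, fnn, fz, ?_, hK0.le, ?_, ?_, ?_⟩, feq, ?_⟩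
  · refine Continuous.min ?_ (by fun_prop)
    exact hc.comp_continuous (by fun_prop) fun s => mem_Ici.2 (le_max_right s 0)
  · intro s hs
    rw [fpos s hs.le]
    exact lt_min (hpos s hs) (by positivity)
  · intro s
    rw [abs_of_nonneg (fnn s)]
    refine (min_le_right _ _).trans (mul_le_mul_of_nonneg_left ?_ hK0.le)
    exact max_le (le_abs_self _) (abs_nonneg _)
  · intro ε hε
    obtain ⟨δ, hδ, h1⟩ := small ε hε
    refine ⟨δ, hδ, fun s hs hsδ => ?_⟩
    rw [fpos s hs.le]
    exact (min_le_left _ _).trans (h1 s hs hsδ)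
  · intro ε hε
    obtain ⟨δ, hδ, η, hη, h1⟩ := hreg ε hε
    refine ⟨min δ (R / 2), by positivity, min η 1, by positivity, fun s ω hs hsδ hω => ?_⟩
    obtain ⟨ha, hb⟩ := lt_min_iff.1 hsδ
    obtain ⟨hc', hd⟩ := lt_min_iff.1 hω
    have := abs_lt.1 hd
    rw [feq s hs.le (by linarith), feq (ω * s) (mul_nonneg (by linarith) hs.le) (by nlinarith)]
    exact h1 s ω hs ha hc'
  · intro s hs
    rw [fpos s (by linarith)]
    exact le_min (hL s hs) (mul_le_mul_of_nonneg_right hKL (by linarith))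

lemma Sol.posi {T : ℝ} {b f : ℝ → ℝ} (hb : Integrable b) {K : ℝ} (F : FH f K)
    {c d : ℝ} {u w : ℝ → ℝ} (h : Sol T b f c d u w) (hc : 0 < c) (hor : 0 < u T ∨ 0 ≤ w T) :
    ∀ x ∈ Icc (0:ℝ) T, 0 < u x := by
  intro x hx
  by_contra hcon
  push Not at hcon
  have := h.cross hb F.cont F.K0 F.lin F.zero hc hx hcon
  rcases hor with h1 | h1
  · linarith [this.1]
  · linarith [this.2]

lemma neumann_core {T : ℝ} (hT : 0 < T) {b f : ℝ → ℝ} (hb : Integrable b) {K : ℝ} (F : FH f K)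
    (hneg : ∫ t in (0:ℝ)..T, b t < 0) {J : Set ℝ}
    (hJT : J ⊆ Icc 0 T) (hJne : J.Nonempty)
    (hJneg : ∀ᵐ x ∂(volume.restrict (Icc 0 T \ J)), b x ≤ 0) {R : ℝ} (hR : 0 < R)
    (hbd : ∀ c d u w, Sol T b f c d u w → (∀ x ∈ Icc (0:ℝ) T, 0 < u x) → ∀ x ∈ J, u x ≤ R) :
    ∃ c d u w, Sol T b f c d u w ∧ (∀ x ∈ Icc (0:ℝ) T, 0 < u x ∧ u x ≤ R) ∧ w 0 = 0 ∧ w T = 0 := by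
  obtain ⟨r0, hr00, hsm⟩ := small_all hT hb F hneg
  set r := min (r0 / 2) R with hr
  have hrp : 0 < r := by positivity
  have hrr0 : r < r0 := (min_le_left _ _).trans_lt (by linarith)
  have hrR : r ≤ R := min_le_right _ _
  set C := R + 1 with hC
  have hrC : r ≤ C := by linarith
  obtain ⟨c, d, u, w, hS, hd, hc1, hc2, hcase⟩ := limit_exists hT.le hb F.cont F.K0 F.lin
    (A := {q | q.2.1 = 0 ∧ r ≤ q.1 ∧ q.1 ≤ C ∧
      ((q.1 = r ∧ q.2.2.2 ≤ 0) ∨ (q.1 = C ∧ 0 ≤ q.2.2.2) ∨ q.2.2.2 = 0)})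
    (M := C) (by
      have l : ∀ p s : ℝ × ℝ × ℝ × ℝ → ℝ, Continuous p → Continuous s → IsClosed {q | p q ≤ s q} :=
        fun p s hp hs => isClosed_le hp hs
      have q : ∀ p s : ℝ × ℝ × ℝ × ℝ → ℝ, Continuous p → Continuous s → IsClosed {q | p q = s q} :=
        fun p s hp hs => isClosed_eq hp hs
      refine (q _ _ (by fun_prop) (by fun_prop)).inter ((l _ _ (by fun_prop) (by fun_prop)).inter
        ((l _ _ (by fun_prop) (by fun_prop)).inter (IsClosed.union ?_ (IsClosed.union ?_ ?_))))
      · exact (q _ _ (by fun_prop) (by fun_prop)).inter (l _ _ (by fun_prop) (by fun_prop))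
      · exact (q _ _ (by fun_prop) (by fun_prop)).inter (l _ _ (by fun_prop) (by fun_prop))
      · exact q _ _ (by fun_prop) (by fun_prop))
    (by
      rintro q ⟨h1, h2, h3, -⟩
      rw [h1, abs_zero, abs_of_nonneg (by linarith)]
      exact ⟨h3, by linarith⟩)
    (by
      intro U W hU hW
      have hφ : Continuous fun c => W (c, 0) T :=
        hW.comp (f := fun c : ℝ => ((c, (0:ℝ)), T)) (by fun_prop)
      rcases le_or_gt (W (r, 0) T) 0 with h1 | h1
      · exact ⟨(r, 0), rfl, le_rfl, hrC, Or.inl ⟨rfl, h1⟩⟩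
      · rcases le_or_gt 0 (W (C, 0) T) with h2 | h2
        · exact ⟨(C, 0), rfl, hrC, le_rfl, Or.inr (Or.inl ⟨rfl, h2⟩)⟩
        · obtain ⟨c, hc, hc0⟩ := intermediate_value_Icc' hrC hφ.continuousOn
            (⟨h2.le, h1.le⟩ : (0:ℝ) ∈ Icc (W (C, 0) T) (W (r, 0) T))
          exact ⟨(c, 0), rfl, hc.1, hc.2, Or.inr (Or.inr hc0)⟩)
  simp only at hd hc1 hc2 hcase
  have hcp : 0 < c := by linarith
  have hini := hS.init hT.le
  rw [hd] at hini
  rcases hcase with ⟨h1, h2⟩ | ⟨h1, h2⟩ | h1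
  · exfalso
    rw [h1] at hS
    have := (hsm r hrp hrr0 d u w hS).2.2.1 (by rw [hd, abs_zero]; positivity) (Or.inl hd)
    linarith
  · exfalso
    have hp := hS.posi hb F hcp (Or.inr h2)
    exact hS.fin hb F.cont F.nonneg hJT hJne hJneg (hbd _ _ _ _ hS hp) ⟨le_rfl, hT.le⟩ hini.2
      (by rw [hini.1, h1]; linarith)
  · have hp := hS.posi hb F hcp (Or.inr h1.ge)
    have ha := hS.apriori hT hb F.cont F.nonneg hJT hJne hJneg (hbd _ _ _ _ hS hp)
      (Or.inl ⟨hini.2, h1⟩)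
    exact ⟨c, d, u, w, hS, fun x hx => ⟨hp x hx, ha x hx⟩, hini.2, h1⟩

lemma periodic_core {T : ℝ} (hT : 0 < T) {b f : ℝ → ℝ} (hb : Integrable b) {K : ℝ} (F : FH f K)
    (hneg : ∫ t in (0:ℝ)..T, b t < 0) {τ : ℝ} (hτ : 0 < τ) (hτT : τ ≤ T)
    (hbpos : ∀ᵐ x ∂(volume.restrict (Icc 0 τ)), 0 ≤ b x) {R : ℝ} (hR : 0 < R)
    (hbd : ∀ c d u w, Sol T b f c d u w → (∀ x ∈ Icc (0:ℝ) T, 0 < u x) →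
      ∀ x ∈ Icc 0 τ, u x ≤ R) :
    ∃ c d u w, Sol T b f c d u w ∧ (∀ x ∈ Icc (0:ℝ) T, 0 < u x) ∧ u T = c ∧ w T = d := by
  obtain ⟨r0, hr00, hsm⟩ := small_all hT hb F hneg
  set r := min (r0 / 2) R with hr
  have hrp : 0 < r := by positivity
  have hrr0 : r < r0 := (min_le_left _ _).trans_lt (by linarith)
  have hrR : r ≤ R := min_le_right _ _
  set C := R + 1 with hC
  have hrC : r ≤ C := by linarith
  set e := 3 * r / T with he
  have he0 : 0 < e := by positivity
  set N := ∫ t, |b t| with hN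
  have hN0 : 0 ≤ N := integral_nonneg fun t => abs_nonneg _
  have hK0 := F.K0
  set D := e + (C + 1) / τ + N * (K * R) with hD
  have hCτ : 0 < (C + 1) / τ := by positivity
  have hNK : 0 ≤ N * (K * R) := by positivity
  have heD : e ≤ D := by linarith
  have hDτ : C + 1 ≤ (D - N * (K * R)) * τ := by
    have : (C + 1) / τ * τ = C + 1 := div_mul_cancel₀ _ hτ.ne'
    have h2 : 0 ≤ e * τ := by positivity
    have h3 : (D - N * (K * R)) * τ = e * τ + (C + 1) / τ * τ := by rw [hD]; ring
    linarith
  obtain ⟨c, d, u, w, hS, hc1, hc2, hd1, hd2, hcase⟩ := limit_exists hT.le hb F.cont F.K0 F.lin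
    (A := {q | r ≤ q.1 ∧ q.1 ≤ C ∧ -D ≤ q.2.1 ∧ q.2.1 ≤ D ∧
      ((q.1 = C ∧ q.1 ≤ q.2.2.1) ∨
       (q.2.1 = -D ∧ q.1 ≤ q.2.2.1) ∨
       (q.2.1 = D ∧ q.1 ≤ q.2.2.1) ∨
       (q.1 = r ∧ q.2.1 ≤ -e ∧ q.1 ≤ q.2.2.1) ∨
       (q.1 = r ∧ q.2.1 = e ∧ q.2.2.1 ≤ q.1) ∨
       (q.1 = r ∧ |q.2.1| ≤ e ∧ q.2.2.1 = q.1 ∧ q.2.2.2 ≤ q.2.1) ∨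
       (q.1 = r ∧ e ≤ q.2.1 ∧ q.2.2.1 = q.1 ∧ q.2.1 ≤ q.2.2.2) ∨
       (q.2.2.1 = q.1 ∧ q.2.2.2 = q.2.1))})
    (M := C + D) (by
      have l : ∀ p s : ℝ × ℝ × ℝ × ℝ → ℝ, Continuous p → Continuous s → IsClosed {q | p q ≤ s q} :=
        fun p s hp hs => isClosed_le hp hs
      have q : ∀ p s : ℝ × ℝ × ℝ × ℝ → ℝ, Continuous p → Continuous s → IsClosed {q | p q = s q} :=
        fun p s hp hs => isClosed_eq hp hs
      refine (l _ _ (by fun_prop) (by fun_prop)).inter ((l _ _ (by fun_prop) (by fun_prop)).inter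
        ((l _ _ (by fun_prop) (by fun_prop)).inter ((l _ _ (by fun_prop) (by fun_prop)).inter
        (IsClosed.union ?_ (IsClosed.union ?_ (IsClosed.union ?_ (IsClosed.union ?_
        (IsClosed.union ?_ (IsClosed.union ?_ (IsClosed.union ?_ ?_))))))))))
      · exact (q _ _ (by fun_prop) (by fun_prop)).inter (l _ _ (by fun_prop) (by fun_prop))
      · exact (q _ _ (by fun_prop) (by fun_prop)).inter (l _ _ (by fun_prop) (by fun_prop))
      · exact (q _ _ (by fun_prop) (by fun_prop)).inter (l _ _ (by fun_prop) (by fun_prop))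
      · exact (q _ _ (by fun_prop) (by fun_prop)).inter
          ((l _ _ (by fun_prop) (by fun_prop)).inter (l _ _ (by fun_prop) (by fun_prop)))
      · exact (q _ _ (by fun_prop) (by fun_prop)).inter
          ((q _ _ (by fun_prop) (by fun_prop)).inter (l _ _ (by fun_prop) (by fun_prop)))
      · exact (q _ _ (by fun_prop) (by fun_prop)).inter
          ((l _ _ (by fun_prop) (by fun_prop)).inter
          ((q _ _ (by fun_prop) (by fun_prop)).inter (l _ _ (by fun_prop) (by fun_prop))))
      · exact (q _ _ (by fun_prop) (by fun_prop)).inter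
          ((l _ _ (by fun_prop) (by fun_prop)).inter
          ((q _ _ (by fun_prop) (by fun_prop)).inter (l _ _ (by fun_prop) (by fun_prop))))
      · exact (q _ _ (by fun_prop) (by fun_prop)).inter (q _ _ (by fun_prop) (by fun_prop)))
    (by
      rintro q ⟨h1, h2, h3, h4, -⟩
      constructor <;> rw [abs_le] <;> constructor <;> linarith)
    (by
      intro U W hU hW
      by_contra hno
      push Not at hno
      have hno' : ∀ c d, r ≤ c → c ≤ C → -D ≤ d → d ≤ D → ¬ ((c = C ∧ c ≤ U (c, d) T) ∨
         (d = -D ∧ c ≤ U (c, d) T) ∨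
         (d = D ∧ c ≤ U (c, d) T) ∨
         (c = r ∧ d ≤ -e ∧ c ≤ U (c, d) T) ∨
         (c = r ∧ d = e ∧ U (c, d) T ≤ c) ∨
         (c = r ∧ |d| ≤ e ∧ U (c, d) T = c ∧ W (c, d) T ≤ d) ∨
         (c = r ∧ e ≤ d ∧ U (c, d) T = c ∧ d ≤ W (c, d) T) ∨
         (U (c, d) T = c ∧ W (c, d) T = d)) := fun c d h1 h2 h3 h4 h5 =>
        hno (c, d) ⟨h1, h2, h3, h4, h5⟩
      obtain ⟨c, hc, d, hd, h1, h2⟩ := topo2d (F1 := fun p => U p T - p.1)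
        (F2 := fun p => W p T - p.2) (r := r) (C := C) (e := e) (D := D)
        ((hU.comp (f := fun p : ℝ × ℝ => (p, T)) (by fun_prop)).sub (by fun_prop))
        ((hW.comp (f := fun p : ℝ × ℝ => (p, T)) (by fun_prop)).sub (by fun_prop))
        hrC he0 heD
        (fun d hd => by
          have := hno' C d hrC le_rfl hd.1 hd.2
          by_contra hh
          exact this (Or.inl ⟨rfl, by simp only at hh; linarith⟩))
        (fun c hc => by
          have := hno' c (-D) hc.1 hc.2 le_rfl (by linarith)
          by_contra hh
          exact this (Or.inr (Or.inl ⟨rfl, by simp only at hh; linarith⟩)))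
        (fun c hc => by
          have := hno' c D hc.1 hc.2 (by linarith) le_rfl
          by_contra hh
          exact this (Or.inr (Or.inr (Or.inl ⟨rfl, by simp only at hh; linarith⟩))))
        (fun d hd => by
          have := hno' r d le_rfl hrC hd.1 (by linarith [hd.2])
          by_contra hh
          exact this (Or.inr (Or.inr (Or.inr (Or.inl
            ⟨rfl, hd.2, by simp only at hh; linarith⟩)))))
        (by
          have := hno' r e le_rfl hrC (by linarith) heD
          by_contra hh
          exact this (Or.inr (Or.inr (Or.inr (Or.inr (Or.inl
            ⟨rfl, rfl, by simp only at hh; linarith⟩))))))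
        (fun d hd h0 => by
          have := hno' r d le_rfl hrC (by linarith [hd.1]) (by linarith [hd.2])
          by_contra hh
          simp only at hh h0
          exact this (Or.inr (Or.inr (Or.inr (Or.inr (Or.inr (Or.inl
            ⟨rfl, abs_le.2 hd, by linarith, by linarith⟩)))))))
        (fun d hd h0 => by
          have := hno' r d le_rfl hrC (by linarith [hd.1]) (by linarith [hd.2])
          by_contra hh
          simp only at hh h0
          exact this (Or.inr (Or.inr (Or.inr (Or.inr (Or.inr (Or.inr (Or.inl
            ⟨rfl, hd.1, by linarith, by linarith⟩))))))))
      simp only at h1 h2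
      exact hno' c d hc.1 hc.2 hd.1 hd.2 (Or.inr (Or.inr (Or.inr (Or.inr (Or.inr (Or.inr (Or.inr
            ⟨by linarith, by linarith⟩))))))))
  simp only at hc1 hc2 hd1 hd2 hcase
  have hcp : 0 < c := by linarith
  have hini := hS.init hT.le
  have h0τ : (0:ℝ) ∈ Icc 0 τ := ⟨le_rfl, hτ.le⟩
  have hττ : τ ∈ Icc 0 τ := ⟨hτ.le, le_rfl⟩
  have hposc : c ≤ u T → (∀ x ∈ Icc (0:ℝ) T, 0 < u x) := fun h =>
    hS.posi hb F hcp (Or.inl (by linarith))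
  rcases hcase with ⟨h1, h2⟩ | ⟨h1, h2⟩ | ⟨h1, h2⟩ | ⟨h1, h2, h3⟩ | ⟨h1, h2, h3⟩ |
    ⟨h1, h2, h3, h4⟩ | ⟨h1, h2, h3, h4⟩ | ⟨h1, h2⟩
  · exfalso
    have := hbd _ _ _ _ hS (hposc h2) 0 h0τ
    rw [hini.1] at this
    linarith
  · exfalso
    have hp := hposc h2 τ ⟨hτ.le, hτT⟩
    have hw := hS.w_anti hb F.cont F.nonneg le_rfl hτT hbpos
    have := hS.u_le le_rfl hτ.le hτT (m := d) fun t ht => by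
      rw [← hini.2]; exact hw 0 h0τ t ht ht.1
    rw [hini.1] at this
    nlinarith
  · exfalso
    have hp := hposc h2
    have hR' := hbd _ _ _ _ hS hp
    have hw : ∀ t ∈ Icc 0 τ, D - N * (K * R) ≤ w t := by
      intro t ht
      have := wdiff hb F.cont hS (B := K * R) (by positivity) ⟨ht.1, ht.2.trans hτT⟩ fun s hs => by
        refine (F.lin _).trans (mul_le_mul_of_nonneg_left ?_ hK0)
        rw [abs_of_pos (hp s ⟨hs.1, hs.2.trans (ht.2.trans hτT)⟩)]
        exact hR' s ⟨hs.1, hs.2.trans ht.2⟩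
      have := (abs_le.1 this).1
      rw [h1] at this
      linarith
    have := hS.u_ge le_rfl hτ.le hτT hw
    rw [hini.1] at this
    have := hR' τ hττ
    linarith
  · exfalso
    have hp := hposc h3
    rw [h1] at hS
    obtain ⟨x, hx, hux⟩ := (hsm r hrp hrr0 d u w hS).1 h2
    linarith [hp x hx]
  · exfalso
    rw [h1] at hS
    have := (hsm r hrp hrr0 d u w hS).2.1 h2
    linarith
  · exfalso
    rw [h1] at hS h3
    have := (hsm r hrp hrr0 d u w hS).2.2.1 h2 (Or.inr h3)
    linarith
  · exfalso
    rw [h1] at hS h3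
    have := (hsm r hrp hrr0 d u w hS).2.2.2 h2 h3
    linarith
  · exact ⟨c, d, u, w, hS, hposc h1.ge, h1, h2⟩

lemma Sol.conv {T : ℝ} (hT : 0 < T) {a a0 f g : ℝ → ℝ} (ha0 : ∀ t ∈ Ioc 0 T, a0 t = a t)
    {c d R : ℝ} {u w : ℝ → ℝ} (h : Sol T a0 f c d u w)
    (hu : ∀ x ∈ Icc (0:ℝ) T, 0 < u x ∧ u x ≤ R) (hfg : ∀ s, 0 ≤ s → s ≤ R → f s = g s) :
    IsSolOn T (fun t => a t * g (u t)) u w := by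
  refine ⟨fun x hx => ?_, h.2.1.continuousOn, fun x hx => ?_⟩
  · have h1 : HasDerivAt (fun x => c + ∫ t in (0:ℝ)..x, w t) (w x) x :=
      ((h.2.1.integral_hasStrictDerivAt 0 x).hasDerivAt).const_add c
    exact h1.hasDerivWithinAt.congr (fun y hy => (h.2.2 y hy).1) (h.2.2 x hx).1
  · rw [(h.2.2 x hx).2, (h.init hT.le).2]
    congr 1
    refine intervalIntegral.integral_congr_ae (ae_of_all _ fun t ht => ?_)
    rw [uIoc_of_le hx.1] at ht
    have htT : t ∈ Ioc 0 T := ⟨ht.1, ht.2.trans hx.2⟩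
    have := hu t ⟨htT.1.le, htT.2⟩
    simp only [ha0 t htT, hfg _ this.1.le this.2]

lemma unrot {T p : ℝ} (hp0 : 0 ≤ p) (hpT : p ≤ T) {a0 f : ℝ → ℝ} (ha : Integrable a0)
    (hz1 : ∀ t ≤ 0, a0 t = 0) (hz2 : ∀ t, T < t → a0 t = 0) (hf : Continuous f)
    {c d : ℝ} {v ω : ℝ → ℝ} (h : Sol T (fun x => a0 (x + p) + a0 (x + p - T)) f c d v ω)
    (hv : v T = c) (hω : ω T = d) (hpos : ∀ x ∈ Icc (0:ℝ) T, 0 < v x) :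
    ∃ u w, Sol T a0 f (u 0) (w 0) u w ∧ (∀ x ∈ Icc (0:ℝ) T, 0 < u x) ∧ u 0 = u T ∧ w 0 = w T := by
  have hT : 0 ≤ T := hp0.trans hpT
  have hini := h.init hT
  have hb : Integrable (fun x => a0 (x + p) + a0 (x + p - T)) := by
    refine (ha.comp_add_right p).add ?_
    have := ha.comp_add_right (p - T)
    refine this.congr (ae_of_all _ fun x => ?_)
    simp only; congr 1; ring
  set b := fun x => a0 (x + p) + a0 (x + p - T) with hbdef
  have gen : ∀ v : ℝ → ℝ, Continuous v → v 0 = v T → ∃ u : ℝ → ℝ, Continuous u ∧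
      (∀ x, x ≤ p → u x = v (x - p + T)) ∧ (∀ x, p ≤ x → u x = v (x - p)) := by
    intro v hvc hv0
    refine ⟨fun x => if p ≤ x then v (x - p) else v (x - p + T), ?_, ?_, ?_⟩
    · refine Continuous.if_le (by fun_prop) (by fun_prop) continuous_const continuous_id ?_
      intro x hx
      rw [← hx]; simp [hv0]
    · intro x hx
      rcases hx.lt_or_eq with h' | h'
      · simp only [if_neg (not_le.2 h')]
      · rw [h']; simp [hv0]
    · intro x hx
      simp only [if_pos hx]
  obtain ⟨u, huc, uL, uR⟩ := gen v h.1 (by rw [hini.1, hv])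
  obtain ⟨w, hwc, wL, wR⟩ := gen ω h.2.1 (by rw [hini.2, hω])
  have hbfv : ∀ x y, IntervalIntegrable (fun t => a0 t * f (u t)) volume x y :=
    fun x y => ii_mul ha (hf.comp huc) x y
  have IL : ∀ x ∈ Icc 0 p, ∫ t in (0:ℝ)..x, w t = u x - u 0 := by
    intro x hx
    have e := h.du (x := T - p) (y := x - p + T) ⟨by linarith, by linarith⟩
      ⟨by linarith [hx.1], by linarith [hx.2]⟩
    rw [uL x hx.2, uL 0 hp0, show (0:ℝ) - p + T = T - p by ring, e]
    have e2 := intervalIntegral.integral_comp_add_right (a := 0) (b := x) (fun t => ω t) (T - p)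
    rw [zero_add, show x + (T - p) = x - p + T by ring] at e2
    rw [← e2]
    refine intervalIntegral.integral_congr fun t ht => ?_
    rw [uIcc_of_le hx.1] at ht
    simp only [wL t (ht.2.trans hx.2)]
    congr 1; ring
  have IR : ∀ x ∈ Icc p T, ∫ t in p..x, w t = u x - u p := by
    intro x hx
    have e := h.du (x := 0) (y := x - p) ⟨by linarith, by linarith⟩
      ⟨by linarith [hx.1], by linarith [hx.2]⟩
    rw [uR x hx.1, uR p le_rfl, sub_self, e]
    have e2 := intervalIntegral.integral_comp_sub_right (a := p) (b := x) (fun t => ω t) p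
    rw [sub_self] at e2
    rw [← e2]
    refine intervalIntegral.integral_congr fun t ht => ?_
    rw [uIcc_of_le hx.1] at ht
    simp only [wR t ht.1]
  have JL : ∀ x ∈ Icc 0 p, ∫ t in (0:ℝ)..x, a0 t * f (u t) = w 0 - w x := by
    intro x hx
    have e := h.dw hb hf (x := T - p) (y := x - p + T) ⟨by linarith, by linarith⟩
      ⟨by linarith [hx.1], by linarith [hx.2]⟩
    have e2 := intervalIntegral.integral_comp_add_right (a := 0) (b := x)
      (fun t => b t * f (v t)) (T - p)
    rw [zero_add, show x + (T - p) = x - p + T by ring] at e2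
    rw [wL x hx.2, wL 0 hp0, show (0:ℝ) - p + T = T - p by ring]
    rw [← e2] at e
    have e3 : ∫ t in (0:ℝ)..x, a0 t * f (u t) =
        ∫ t in (0:ℝ)..x, b (t + (T - p)) * f (v (t + (T - p))) := by
      refine intervalIntegral.integral_congr_ae (ae_of_all _ fun t ht => ?_)
      rw [uIoc_of_le hx.1] at ht
      rw [uL t (ht.2.trans hx.2), show t - p + T = t + (T - p) by ring]
      congr 1
      simp only [hbdef]
      rw [hz2 _ (by linarith [ht.1] : T < t + (T - p) + p), zero_add]
      congr 1; ring
    rw [e3]; linarith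
  have JR : ∀ x ∈ Icc p T, ∫ t in p..x, a0 t * f (u t) = w p - w x := by
    intro x hx
    have e := h.dw hb hf (x := 0) (y := x - p) ⟨by linarith, by linarith⟩
      ⟨by linarith [hx.1], by linarith [hx.2]⟩
    have e2 := intervalIntegral.integral_comp_sub_right (a := p) (b := x)
      (fun t => b t * f (v t)) p
    rw [sub_self] at e2
    rw [wR x hx.1, wR p le_rfl, sub_self]
    rw [← e2] at e
    have e3 : ∫ t in p..x, a0 t * f (u t) = ∫ t in p..x, b (t - p) * f (v (t - p)) := by
      refine intervalIntegral.integral_congr_ae (ae_of_all _ fun t ht => ?_)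
      rw [uIoc_of_le hx.1] at ht
      rw [uR t ht.1.le]
      congr 1
      simp only [hbdef]
      rw [hz1 (t - p + p - T) (by linarith [ht.2, hx.2]), add_zero]
      congr 1; ring
    rw [e3]; linarith
  refine ⟨u, w, ⟨huc, hwc, fun x hx => ?_⟩, fun x hx => ?_, ?_, ?_⟩
  · rcases le_total x p with hxp | hxp
    · rw [IL x ⟨hx.1, hxp⟩, JL x ⟨hx.1, hxp⟩]
      constructor <;> ring
    · rw [← intervalIntegral.integral_add_adjacent_intervals (hwc.intervalIntegrable 0 p)
        (hwc.intervalIntegrable p x),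
        ← intervalIntegral.integral_add_adjacent_intervals (hbfv 0 p) (hbfv p x),
        IL p ⟨hp0, le_rfl⟩, JL p ⟨hp0, le_rfl⟩, IR x ⟨hxp, hx.2⟩, JR x ⟨hxp, hx.2⟩]
      constructor <;> ring
  · rcases le_total x p with hxp | hxp
    · rw [uL x hxp]; exact hpos _ ⟨by linarith [hx.1], by linarith⟩
    · rw [uR x hxp]; exact hpos _ ⟨by linarith [hx.1], by linarith [hx.2]⟩
  · rw [uL 0 hp0, uR T hpT]; congr 1; ring
  · rw [wL 0 hp0, wR T hpT]; congr 1; ring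

lemma exists_pos_le {m : ℕ} (δ : Fin m → ℝ) (h : ∀ i, 0 < δ i) : ∃ e > (0:ℝ), ∀ i, e ≤ δ i := by
  obtain ⟨M, hM⟩ := Finite.exists_le (fun i => (δ i)⁻¹)
  refine ⟨(max M 1)⁻¹, by positivity, fun i => ?_⟩
  exact inv_le_of_inv_le₀ (h i) ((hM i).trans (le_max_left _ _))

lemma rot_int {T p : ℝ} (hp0 : 0 ≤ p) (hpT : p ≤ T) {a0 : ℝ → ℝ} (ha : Integrable a0)
    (hz1 : ∀ t ≤ 0, a0 t = 0) (hz2 : ∀ t, T < t → a0 t = 0) :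
    Integrable (fun x => a0 (x + p) + a0 (x + p - T)) ∧
    ∫ x in (0:ℝ)..T, (a0 (x + p) + a0 (x + p - T)) = ∫ x in (0:ℝ)..T, a0 x := by
  have i1 := ha.comp_add_right p
  have i2 : Integrable fun x => a0 (x + p - T) := by
    have := ha.comp_add_right (p - T)
    refine this.congr (ae_of_all _ fun x => ?_)
    simp only; congr 1; ring
  refine ⟨i1.add i2, ?_⟩
  rw [intervalIntegral.integral_add i1.intervalIntegrable i2.intervalIntegrable]
  have e1 := intervalIntegral.integral_comp_add_right (a := 0) (b := T) (fun t => a0 t) p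
  have e2 := intervalIntegral.integral_comp_add_right (a := 0) (b := T) (fun t => a0 t) (p - T)
  have e2' : ∫ x in (0:ℝ)..T, a0 (x + p - T) = ∫ x in (0:ℝ)..T, a0 (x + (p - T)) := by
    congr 1; funext x; congr 1; ring
  rw [e2', e1, e2, zero_add, zero_add, show T + (p - T) = p by ring]
  have ii : ∀ x y, IntervalIntegrable a0 volume x y := fun x y => ha.intervalIntegrable
  have z1 : ∫ x in (p - T)..0, a0 x = 0 := by
    rw [intervalIntegral.integral_congr (g := fun _ => (0:ℝ))]
    · simp
    · intro t ht
      rw [uIcc_of_le (by linarith)] at ht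
      exact hz1 t ht.2
  have z2 : ∫ x in T..(T + p), a0 x = 0 := by
    rw [intervalIntegral.integral_congr_ae (g := fun _ => (0:ℝ))]
    · simp
    · refine ae_of_all _ fun t ht => ?_
      rw [uIoc_of_le (by linarith)] at ht
      exact hz2 t ht.1
  have s1 := intervalIntegral.integral_add_adjacent_intervals (ii (p - T) 0) (ii 0 p)
  have s2 := intervalIntegral.integral_add_adjacent_intervals (ii 0 p) (ii p (T + p))
  have s3 := intervalIntegral.integral_add_adjacent_intervals (ii 0 T) (ii T (T + p))
  linarith

theorem statement_3
    (T : ℝ) (hT : 0 < T)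
    (g : ℝ → ℝ) (hg1 : CondG1 g) (hreg : RegOscAtZero g)
    (hg0 : Tendsto (fun s => g s / s) (nhdsWithin 0 (Ioi 0)) (nhds 0))
    (hginf : Tendsto (fun s => g s / s) atTop atTop)
    (a : ℝ → ℝ) (ha : IntervalIntegrable a volume 0 T)
    (ha1 : CondA1 T a)
    (ha2 : (∫ x in (0:ℝ)..T, a x) < 0) :
    PosSolNeumann T a g ∧ PosSolPeriodic T a g := by
  obtain ⟨m, σ, τ, hm, hστ, -, hp, hne, hn⟩ := ha1
  set a0 : ℝ → ℝ := (Ioc 0 T).indicator a with ha0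
  have ha0i : Integrable a0 :=
    (integrable_indicator_iff measurableSet_Ioc).2 ((intervalIntegrable_iff_integrableOn_Ioc_of_le hT.le).1 ha)
  have ha0e : ∀ t ∈ Ioc 0 T, a0 t = a t := fun t ht => indicator_of_mem ht _
  have hz1 : ∀ t ≤ 0, a0 t = 0 := fun t ht => indicator_of_notMem (fun h => by linarith [h.1]) _
  have hz2 : ∀ t, T < t → a0 t = 0 := fun t ht => indicator_of_notMem (fun h => by linarith [h.2]) _
  have hae : ∀ᵐ x ∂(volume.restrict (Icc 0 T)), a0 x = a x := by
    rw [← restrict_Ioc_eq_restrict_Icc]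
    filter_upwards [ae_restrict_mem measurableSet_Ioc] with t ht using ha0e t ht
  have hI : ∀ i, Icc (σ i) (τ i) ⊆ Icc 0 T := fun i => Icc_subset_Icc (hστ i).1 (hστ i).2.2
  have hp0 : ∀ i, ∀ᵐ x ∂(volume.restrict (Icc (σ i) (τ i))), 0 ≤ a0 x := by
    intro i
    filter_upwards [ae_restrict_of_ae_restrict_of_subset (hI i) hae, hp i] with t h1 h2
    rw [h1]; exact h2
  have hne0 : ∀ i, ¬ (∀ᵐ x ∂(volume.restrict (Icc (σ i) (τ i))), a0 x = 0) := by
    intro i hc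
    apply hne i
    filter_upwards [ae_restrict_of_ae_restrict_of_subset (hI i) hae, hc] with t h1 h2
    rw [← h1]; exact h2
  set J := ⋃ i, Icc (σ i) (τ i) with hJ
  have hn0 : ∀ᵐ x ∂(volume.restrict (Icc 0 T \ J)), a0 x ≤ 0 := by
    filter_upwards [ae_restrict_of_ae_restrict_of_subset sdiff_subset hae, hn] with t h1 h2
    rw [h1]; exact h2
  have hJT : J ⊆ Icc 0 T := iUnion_subset hI
  have hJne : J.Nonempty := ⟨σ ⟨0, hm⟩, mem_iUnion.2 ⟨⟨0, hm⟩, le_rfl, (hστ _).2.1⟩⟩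
  have ha02 : ∫ x in (0:ℝ)..T, a0 x < 0 := by
    rw [intervalIntegral.integral_congr_ae (g := a)]
    · exact ha2
    · refine ae_of_all _ fun t ht => ?_
      rw [uIoc_of_le hT.le] at ht
      exact ha0e t ht
  -- rotation
  set i0 : Fin m := ⟨0, hm⟩ with hi0
  set p := σ i0 with hpdef
  set q := τ i0 with hqdef
  have hpp : 0 ≤ p := (hστ i0).1
  have hqT : q ≤ T := (hστ i0).2.2
  have hpq : p < q := (int_pos_of ha0i (hp0 i0) (hne0 i0)).1
  have hpT : p ≤ T := by linarith
  obtain ⟨hbi, hbint⟩ := rot_int hpp hpT ha0i hz1 hz2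
  set b := fun x => a0 (x + p) + a0 (x + p - T) with hb
  have hbx : ∀ x ≤ q - p, b x = a0 (x + p) := by
    intro x hx
    simp only [hb]
    rw [hz1 (x + p - T) (by linarith), add_zero]
  have hbp : ∀ᵐ x ∂(volume.restrict (Icc 0 (q - p))), 0 ≤ b x := by
    have h1 := (ae_restrict_iff' measurableSet_Icc).1 (hp0 i0)
    have h2 := (measurePreserving_add_right volume p).quasiMeasurePreserving.ae h1
    refine (ae_restrict_iff' measurableSet_Icc).2 ?_
    filter_upwards [h2] with x hx hxm
    rw [hbx x hxm.2]
    exact hx ⟨by linarith [hxm.1], by linarith [hxm.2]⟩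
  have hbne : ¬ (∀ᵐ x ∂(volume.restrict (Icc 0 (q - p))), b x = 0) := by
    intro hc
    apply hne0 i0
    have h1 := (ae_restrict_iff' measurableSet_Icc).1 hc
    have h2 := (measurePreserving_sub_right volume p).quasiMeasurePreserving.ae h1
    refine (ae_restrict_iff' measurableSet_Icc).2 ?_
    filter_upwards [h2] with x hx hxm
    have h3 := hx ⟨by linarith [hxm.1], by linarith [hxm.2]⟩
    rw [hbx _ (by linarith [hxm.2]), sub_add_cancel] at h3
    exact h3
  -- constants
  choose Li δi hδi hBi using fun i => bd_exists ha0i (hp0 i) (hne0 i)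
  obtain ⟨Lb, δb, hδb, hBb⟩ := bd_exists hbi hbp hbne
  obtain ⟨L1, hL1⟩ := Finite.exists_le Li
  obtain ⟨δ1, hδ1, hδ1'⟩ := exists_pos_le δi hδi
  set L := max L1 Lb with hL
  set δ := min δ1 δb with hδ
  have hδ0 : 0 < δ := lt_min hδ1 hδb
  have hBi' : ∀ i, Bd a0 (σ i) (τ i) L δ := fun i =>
    (hBi i).mono ((hL1 i).trans (le_max_left _ _)) hδ0 ((min_le_left _ _).trans (hδ1' i))
  have hBb' : Bd b 0 (q - p) L δ := hBb.mono (le_max_right _ _) hδ0 (min_le_right _ _)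
  obtain ⟨S, hS⟩ := eventually_atTop.1 (hginf.eventually_ge_atTop L)
  set R0 := max S 1 with hR0
  have hR0p : 0 < R0 := by positivity
  have hgL : ∀ s, R0 ≤ s → L * s ≤ g s := by
    intro s hs
    have hs0 : 0 < s := hR0p.trans_le hs
    have := hS s ((le_max_left _ _).trans hs)
    rwa [le_div_iff₀ hs0] at this
  set R := R0 / δ with hR
  have hRp : 0 < R := by positivity
  obtain ⟨f, K, F, hfg, hfL⟩ := f_exists hg1 hreg hg0 hgL hR0p hRp
  have hbd : ∀ c d u w, Sol T a0 f c d u w → (∀ x ∈ Icc (0:ℝ) T, 0 < u x) →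
      ∀ x ∈ J, u x ≤ R := by
    intro c d u w hs hu x hx
    obtain ⟨i, hi⟩ := mem_iUnion.1 hx
    exact (hBi' i T f c d u w R0 hs (hστ i).1 (hστ i).2.2 F.cont F.nonneg hfL hR0p
      (fun y hy => (hu y (hI i hy)).le) x hi).le
  have hbdb : ∀ c d u w, Sol T b f c d u w → (∀ x ∈ Icc (0:ℝ) T, 0 < u x) →
      ∀ x ∈ Icc 0 (q - p), u x ≤ R := by
    intro c d u w hs hu x hx
    exact (hBb' T f c d u w R0 hs le_rfl (by linarith) F.cont F.nonneg hfL hR0p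
      (fun y hy => (hu y ⟨hy.1, by linarith [hy.2]⟩).le) x hx).le
  constructor
  · obtain ⟨c, d, u, w, hs, hu, h0, h1⟩ := neumann_core hT ha0i F ha02 hJT hJne hn0 hRp hbd
    exact ⟨u, w, hs.conv hT ha0e hu hfg, fun x hx => (hu x hx).1, h0, h1⟩
  · obtain ⟨c, d, v, ω, hs, hv, h0, h1⟩ := periodic_core hT hbi F (by rw [hbint]; exact ha02)
      (by linarith : 0 < q - p) (by linarith) hbp hRp hbdb
    obtain ⟨u, w, hs', hu, h2, h3⟩ := unrot hpp hpT ha0i hz1 hz2 F.cont hs h0 h1 hv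
    have hap := hs'.apriori hT ha0i F.cont F.nonneg hJT hJne hn0 (hbd _ _ _ _ hs' hu)
      (Or.inr ⟨h2, h3⟩)
    exact ⟨u, w, hs'.conv hT ha0e (fun x hx => ⟨hu x hx, hap x hx⟩) hfg, hu, h2, h3⟩
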